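/- Let Ω ⊆ ℝ³ be a domain and let (ρ, u) be a weak solution of the stationary barotropic Navier–Stokes system on Ω with pressure p and potential G. Assume p : [0,∞) → ℝ is continuous, p(0) = 0, p(s) ≥ 0 for all s ≥ 0, and there is a constant C > 0 with p(s) ≤ C·√s for all 0 ≤ s < 1. Assume either G ∈ D₀^{1,q}(Ω) for some 6/5 ≤ q < ∞ or G ∈ W^{1,∞}(Ω). If ρ ∈ L¹(Ω) ∩ L^∞(Ω), then u = 0 almost everywhere in Ω. -/

import Mathlib

noncomputable section

open MeasureTheory Metric Filter Topology Set

/-- Three-dimensional Euclidean space. -/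
abbrev E3 : Type := EuclideanSpace ℝ (Fin 3)

/-- Partial derivative of a scalar function in the `i`-th coordinate direction. -/
def pd (f : E3 → ℝ) (i : Fin 3) : E3 → ℝ :=
  fun x => fderiv ℝ f x (EuclideanSpace.single i 1)

/-- Classical gradient matrix of a vector field: `(tgrad φ x) i j = ∂_j φ_i (x)`. -/
def tgrad (φ : E3 → Fin 3 → ℝ) (x : E3) : Fin 3 → Fin 3 → ℝ :=
  fun i j => pd (fun y => φ y i) j x

/-- Smooth compactly supported scalar test function with support in `Ω`. -/
def IsTest (Ω : Set E3) (φ : E3 → ℝ) : Prop :=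
  ContDiff ℝ ((⊤ : ℕ∞) : WithTop ℕ∞) φ ∧ HasCompactSupport φ ∧ tsupport φ ⊆ Ω

/-- `C^n` compactly supported vector-valued test function with support in `Ω`. -/
def IsTestVec (n : WithTop ℕ∞) (Ω : Set E3) (φ : E3 → Fin 3 → ℝ) : Prop :=
  ContDiff ℝ n φ ∧ HasCompactSupport φ ∧ tsupport φ ⊆ Ω

/-- The Newtonian viscous stress tensor
`S(M) = μ (M + Mᵗ - (2/3) (tr M) I) + η (tr M) I`. -/
def Smat (μ η : ℝ) (M : Fin 3 → Fin 3 → ℝ) : Fin 3 → Fin 3 → ℝ :=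
  fun i j =>
    μ * (M i j + M j i - (2 / 3) * (∑ k, M k k) * (if i = j then (1 : ℝ) else 0))
      + η * (∑ k, M k k) * (if i = j then (1 : ℝ) else 0)

/-- `dG` is the weak gradient of the scalar function `G` on `Ω`. -/
def HasWeakGradOn (Ω : Set E3) (G : E3 → ℝ) (dG : E3 → Fin 3 → ℝ) : Prop :=
  ∀ φ : E3 → ℝ, IsTest Ω φ → ∀ i : Fin 3,
    ∫ x in Ω, G x * pd φ i x = - ∫ x in Ω, dG x i * φ x

/-- `du` is the weak gradient (Jacobian) of the vector field `u` on `Ω`. -/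
def HasWeakGradVecOn (Ω : Set E3) (u : E3 → Fin 3 → ℝ) (du : E3 → Fin 3 → Fin 3 → ℝ) : Prop :=
  ∀ φ : E3 → ℝ, IsTest Ω φ → ∀ i j : Fin 3,
    ∫ x in Ω, u x i * pd φ j x = - ∫ x in Ω, du x i j * φ x

/-- `u ∈ D₀^{1,2}(Ω; ℝ³)` with weak gradient `du`: `u` is locally integrable on `Ω`, its weak
gradient belongs to `L²(Ω)`, and `u` can be approximated by smooth compactly supported fields
`uₙ` with `∇uₙ → ∇u` in `L²(Ω)` and `uₙ → u` in `L⁶(Ω)`. -/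
def MemD012 (Ω : Set E3) (u : E3 → Fin 3 → ℝ) (du : E3 → Fin 3 → Fin 3 → ℝ) : Prop :=
  LocallyIntegrableOn u Ω volume ∧
  HasWeakGradVecOn Ω u du ∧
  MemLp du 2 (volume.restrict Ω) ∧
  ∃ un : ℕ → E3 → Fin 3 → ℝ,
    (∀ n, IsTestVec ((⊤ : ℕ∞) : WithTop ℕ∞) Ω (un n)) ∧
    Tendsto (fun n => eLpNorm (fun x => tgrad (un n) x - du x) 2 (volume.restrict Ω))
      atTop (𝓝 0) ∧
    Tendsto (fun n => eLpNorm (fun x => un n x - u x) 6 (volume.restrict Ω)) atTop (𝓝 0)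

/-- `G ∈ D₀^{1,q}(Ω)` with weak gradient `dG`. -/
def MemD01q (Ω : Set E3) (G : E3 → ℝ) (dG : E3 → Fin 3 → ℝ) (q : ℝ) : Prop :=
  HasWeakGradOn Ω G dG ∧
  MemLp dG (ENNReal.ofReal q) (volume.restrict Ω) ∧
  ∃ Gn : ℕ → E3 → ℝ,
    (∀ n, IsTest Ω (Gn n)) ∧
    Tendsto (fun n =>
        eLpNorm (fun x => (fun i => pd (Gn n) i x) - dG x) (ENNReal.ofReal q)
          (volume.restrict Ω)) atTop (𝓝 0) ∧
    ∀ K : Set E3, IsCompact K → K ⊆ Ω →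
      Tendsto (fun n => ∫ x in K, |Gn n x - G x|) atTop (𝓝 0)

/-- `G ∈ W^{1,∞}(Ω)` with weak gradient `dG`: both `G` and `∇G` are essentially bounded. -/
def MemW1inf (Ω : Set E3) (G : E3 → ℝ) (dG : E3 → Fin 3 → ℝ) : Prop :=
  HasWeakGradOn Ω G dG ∧
  MemLp G ⊤ (volume.restrict Ω) ∧ MemLp dG ⊤ (volume.restrict Ω)

/-- Weak solution `(ρ, u)` (with weak gradient `du` of `u` and weak gradient `dG` of `G`) of the
stationary barotropic Navier–Stokes system
`div(ρu) = 0`, `div(ρ u⊗u) + ∇p(ρ) − div S(∇u) = ρ∇G` on `Ω` with no-slip boundary condition. -/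
structure WeakSolution (Ω : Set E3) (μ η : ℝ) (p : ℝ → ℝ)
    (G : E3 → ℝ) (dG : E3 → Fin 3 → ℝ)
    (ρ : E3 → ℝ) (u : E3 → Fin 3 → ℝ) (du : E3 → Fin 3 → Fin 3 → ℝ) : Prop where
  aemeas_ρ : AEMeasurable ρ volume
  aemeas_u : AEMeasurable u volume
  weakGrad_G : HasWeakGradOn Ω G dG
  ρ_nonneg : ∀ᵐ x ∂(volume.restrict Ω), 0 ≤ ρ x
  ρu_locInt : LocallyIntegrableOn (fun x => fun i => ρ x * u x i) (closure Ω) volume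
  mass : ∀ φ : E3 → ℝ, ContDiff ℝ ((⊤ : ℕ∞) : WithTop ℕ∞) φ → HasCompactSupport φ →
    ∫ x in Ω, ρ x * (∑ i, u x i * pd φ i x) = 0
  ρ_locInt : LocallyIntegrableOn ρ Ω volume
  ρu2_locInt : LocallyIntegrableOn (fun x => ρ x * (∑ i, (u x i) ^ 2)) Ω volume
  pρ_locInt : LocallyIntegrableOn (fun x => p (ρ x)) Ω volume
  ρdG_locInt : LocallyIntegrableOn (fun x => fun i => ρ x * dG x i) Ω volume
  u_D012 : MemD012 Ω u du
  momentum : ∀ φ : E3 → Fin 3 → ℝ, IsTestVec 1 Ω φ →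
    ∫ x in Ω, ((∑ i, ∑ j, ρ x * u x i * u x j * tgrad φ x i j)
        + p (ρ x) * (∑ i, tgrad φ x i i))
      = (∫ x in Ω, ∑ i, ∑ j, Smat μ η (du x) i j * tgrad φ x i j)
        - ∫ x in Ω, ∑ i, ρ x * dG x i * φ x i

open scoped ENNReal NNReal Convolution ContDiff

/-!
Extend `ρ`, `u`, `∇u` and `∇G` by zero to `ℝ³` and test the momentum equation with the smooth
fields `vₙ → u`. In the limit this is the energy identity, in which three terms vanish because
`div(ρu) = 0`.

* Convection: the mass equation tested with `|vₙ|²` gives `∫ ρ u⊗vₙ : ∇vₙ = 0`.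
* Force: if `G` is a limit of test functions `Gₙ`, test the mass equation with `Gₙ`. If `G` and
  `∇G` are only bounded, test it with `G ψ_ε(vₙ)`, where `ψ_ε(w) = |w|² / (ε² + |w|²)` restores the
  boundary condition, and let `n → ∞`, then `ε → 0`; the error stays bounded by a multiple of
  `|ρ ∇u|`, which is integrable.
* Pressure: by the DiPerna–Lions commutator argument `∫ (s b'(s) - b(s))|_{s = ρ} div u = 0`. For
  `b(s) = s g(s)` the integrand is `s² g'(s)`, and `g'(s) = p(s) / (s² + ε)` yields
  `∫ p(ρ) div u = 0` as `ε → 0`; the bound `p(s) ≲ √s` puts `p(ρ)` into `L²`.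

What is left is `∫ S(∇u) : ∇u = 0`. Coercivity of `S` makes `∇u` vanish, and the Sobolev inequality
makes `u` vanish.
-/

/-! ### Convergence in `L^p` -/

/-- The sequence `f` converges to `g` in `L^p(μ)`. Membership in `L^p` of the terms and of the
limit is part of the notion, so that limits can be multiplied and integrated without further side
conditions. -/
structure LpTendsto {α : Type*} [MeasurableSpace α] (p : ℝ≥0∞) (μ : Measure α)
    (f : ℕ → α → ℝ) (g : α → ℝ) : Prop where
  memLp : ∀ n, MemLp (f n) p μ
  memLp_limit : MemLp g p μ
  tendsto_eLpNorm_sub : Tendsto (fun n => eLpNorm (fun x => f n x - g x) p μ) atTop (𝓝 0)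

namespace LpTendsto

variable {α : Type*} [MeasurableSpace α] {μ : Measure α} {p q r : ℝ≥0∞}
  {f f₁ f₂ w : ℕ → α → ℝ} {g g₁ g₂ v : α → ℝ}

lemma of_eLpNorm_sub_le (hf : ∀ n, MemLp (f n) p μ) (hg : MemLp g p μ) {B : ℕ → ℝ≥0∞}
    (hle : ∀ n, eLpNorm (fun x => f n x - g x) p μ ≤ B n) (hB : Tendsto B atTop (𝓝 0)) :
    LpTendsto p μ f g :=
  ⟨hf, hg, tendsto_of_tendsto_of_tendsto_of_le_of_le tendsto_const_nhds hB (fun _ => bot_le) hle⟩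

lemma const (hg : MemLp g p μ) : LpTendsto p μ (fun _ => g) g :=
  ⟨fun _ => hg, hg, by simp⟩

lemma comp_tendsto (h : LpTendsto p μ f g) {ns : ℕ → ℕ} (hns : Tendsto ns atTop atTop) :
    LpTendsto p μ (fun n => f (ns n)) g :=
  ⟨fun n => h.memLp (ns n), h.memLp_limit, h.tendsto_eLpNorm_sub.comp hns⟩

lemma aestronglyMeasurable_sub (h : LpTendsto p μ f g) (n : ℕ) :
    AEStronglyMeasurable (fun x => f n x - g x) μ :=
  ((h.memLp n).sub h.memLp_limit).aestronglyMeasurable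

lemma add (hp : 1 ≤ p) (h₁ : LpTendsto p μ f₁ g₁) (h₂ : LpTendsto p μ f₂ g₂) :
    LpTendsto p μ (fun n x => f₁ n x + f₂ n x) (fun x => g₁ x + g₂ x) := by
  refine of_eLpNorm_sub_le (fun n => (h₁.memLp n).add (h₂.memLp n))
    (h₁.memLp_limit.add h₂.memLp_limit) (fun n => ?_)
    (by simpa using h₁.tendsto_eLpNorm_sub.add h₂.tendsto_eLpNorm_sub)
  refine le_of_eq_of_le (congrArg (eLpNorm · p μ) ?_)
    (eLpNorm_add_le (h₁.aestronglyMeasurable_sub n) (h₂.aestronglyMeasurable_sub n) hp)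
  funext x
  simp only [Pi.add_apply]
  ring

lemma sum (hp : 1 ≤ p) {ι : Type*} (s : Finset ι) {f : ι → ℕ → α → ℝ} {g : ι → α → ℝ}
    (h : ∀ i ∈ s, LpTendsto p μ (f i) (g i)) :
    LpTendsto p μ (fun n x => ∑ i ∈ s, f i n x) (fun x => ∑ i ∈ s, g i x) := by
  classical
  induction s using Finset.induction_on with
  | empty => simpa using const (p := p) (μ := μ) (g := fun _ => (0 : ℝ)) (by simp)
  | insert a s ha ih =>
    simp only [Finset.sum_insert ha]
    exact (h a (by simp)).add hp (ih fun i hi => h i (by simp [hi]))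

lemma eLpNorm_mul_sub_mul_le (hr : 1 ≤ r) [ENNReal.HolderTriple p q r] {f₁ f₂ g₁ g₂ : α → ℝ}
    (hf₁ : AEStronglyMeasurable (fun x => f₁ x - g₁ x) μ)
    (hf₂ : AEStronglyMeasurable (fun x => f₂ x - g₂ x) μ)
    (hg₁ : AEStronglyMeasurable g₁ μ) (hg₂ : AEStronglyMeasurable g₂ μ) :
    eLpNorm (fun x => f₁ x * f₂ x - g₁ x * g₂ x) r μ ≤
      eLpNorm (fun x => f₁ x - g₁ x) p μ * eLpNorm (fun x => f₂ x - g₂ x) q μ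
      + (eLpNorm (fun x => f₁ x - g₁ x) p μ * eLpNorm g₂ q μ
      + eLpNorm g₁ p μ * eLpNorm (fun x => f₂ x - g₂ x) q μ) := by
  have holder {a b : α → ℝ} (ha : AEStronglyMeasurable a μ) (hb : AEStronglyMeasurable b μ) :
      eLpNorm (a • b) r μ ≤ eLpNorm a p μ * eLpNorm b q μ := eLpNorm_smul_le_mul_eLpNorm hb ha
  calc eLpNorm (fun x => f₁ x * f₂ x - g₁ x * g₂ x) r μ
      = eLpNorm ((fun x => f₁ x - g₁ x) • (fun x => f₂ x - g₂ x)
          + ((fun x => f₁ x - g₁ x) • g₂ + g₁ • fun x => f₂ x - g₂ x)) r μ := by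
        refine congrArg (eLpNorm · r μ) ?_
        funext x
        simp only [Pi.add_apply, smul_eq_mul, Pi.mul_apply]
        ring
    _ ≤ _ := (eLpNorm_add_le (hf₁.smul hf₂) ((hf₁.smul hg₂).add (hg₁.smul hf₂)) hr).trans
        (add_le_add (holder hf₁ hf₂)
          ((eLpNorm_add_le (hf₁.smul hg₂) (hg₁.smul hf₂) hr).trans
            (add_le_add (holder hf₁ hg₂) (holder hg₁ hf₂))))

lemma mul (hr : 1 ≤ r) [ENNReal.HolderTriple p q r] (h₁ : LpTendsto p μ f₁ g₁)
    (h₂ : LpTendsto q μ f₂ g₂) :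
    LpTendsto r μ (fun n x => f₁ n x * f₂ n x) (fun x => g₁ x * g₂ x) := by
  refine of_eLpNorm_sub_le (fun n => (h₂.memLp n).mul' (h₁.memLp n))
    (h₂.memLp_limit.mul' h₁.memLp_limit)
    (fun n => eLpNorm_mul_sub_mul_le (p := p) (q := q) hr (h₁.aestronglyMeasurable_sub n)
      (h₂.aestronglyMeasurable_sub n) h₁.memLp_limit.1 h₂.memLp_limit.1) ?_
  have differences := ENNReal.Tendsto.mul h₁.tendsto_eLpNorm_sub (Or.inr ENNReal.zero_ne_top)
    h₂.tendsto_eLpNorm_sub (Or.inr ENNReal.zero_ne_top)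
  have left := ENNReal.Tendsto.mul_const (b := eLpNorm g₂ q μ) h₁.tendsto_eLpNorm_sub
    (Or.inr h₂.memLp_limit.eLpNorm_ne_top)
  have right := ENNReal.Tendsto.const_mul (a := eLpNorm g₁ p μ) h₂.tendsto_eLpNorm_sub
    (Or.inr h₁.memLp_limit.eLpNorm_ne_top)
  simpa using differences.add (left.add right)

lemma tendsto_integral (h : LpTendsto 1 μ f g) :
    Tendsto (fun n => ∫ x, f n x ∂μ) atTop (𝓝 (∫ x, g x ∂μ)) :=
  tendsto_integral_of_L1' g h.memLp_limit.1
    (Eventually.of_forall fun n => memLp_one_iff_integrable.1 (h.memLp n)) h.tendsto_eLpNorm_sub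

lemma integral_eq_zero (h : LpTendsto 1 μ f g) (hf : ∀ n, ∫ x, f n x ∂μ = 0) :
    ∫ x, g x ∂μ = 0 :=
  tendsto_nhds_unique h.tendsto_integral (by simp [hf])

lemma exists_subseq_tendsto_ae (hp : p ≠ 0) (h : LpTendsto p μ f g) :
    ∃ ns : ℕ → ℕ, StrictMono ns ∧ ∀ᵐ x ∂μ, Tendsto (fun n => f (ns n) x) atTop (𝓝 (g x)) :=
  (tendstoInMeasure_of_tendsto_eLpNorm hp (fun n => (h.memLp n).1) h.memLp_limit.1
    h.tendsto_eLpNorm_sub).exists_seq_tendsto_ae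

lemma tendsto_integral_abs_sub (h : LpTendsto 1 μ f g) :
    Tendsto (fun n => ∫ x, |f n x - g x| ∂μ) atTop (𝓝 0) := by
  have key : ∀ n, ∫ x, |f n x - g x| ∂μ = (eLpNorm (fun x => f n x - g x) 1 μ).toReal := fun n => by
    rw [eLpNorm_one_eq_lintegral_enorm, ← integral_norm_eq_lintegral_enorm
      (h.aestronglyMeasurable_sub n)]
    rfl
  simpa only [key, ENNReal.toReal_zero, Function.comp_def] using
    (ENNReal.tendsto_toReal ENNReal.zero_ne_top).comp h.tendsto_eLpNorm_sub

lemma of_dominated (hp : p ≠ ⊤) {bound : α → ℝ} (hf : ∀ n, AEStronglyMeasurable (f n) μ)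
    (hbound : MemLp bound p μ) (hle : ∀ n, ∀ᵐ x ∂μ, |f n x| ≤ bound x)
    (hlim : ∀ᵐ x ∂μ, Tendsto (fun n => f n x) atTop (𝓝 (g x))) : LpTendsto p μ f g := by
  have hg : AEStronglyMeasurable g μ := aestronglyMeasurable_of_tendsto_ae atTop hf hlim
  have hg_le : ∀ᵐ x ∂μ, |g x| ≤ bound x := by
    filter_upwards [hlim, ae_all_iff.2 hle] with x hx hxle
    exact le_of_tendsto hx.abs (Eventually.of_forall hxle)
  refine ⟨fun n => hbound.mono' (hf n) (hle n), hbound.mono' hg hg_le, ?_⟩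
  rcases eq_or_ne p 0 with rfl | hp0
  · simp
  have hp_pos : 0 < p.toReal := ENNReal.toReal_pos hp0 hp
  have lintegral_tendsto :
      Tendsto (fun n => ∫⁻ x, ‖f n x - g x‖ₑ ^ p.toReal ∂μ) atTop (𝓝 0) := by
    rw [← lintegral_zero (μ := μ)]
    refine tendsto_lintegral_of_dominated_convergence' (fun x => ‖2 * bound x‖ₑ ^ p.toReal)
      (fun n => ((hf n).sub hg).enorm.pow_const _) (fun n => ?_) ?_ ?_
    · filter_upwards [hle n, hg_le] with x hfx hgx
      gcongr
      rw [enorm_le_iff_norm_le, Real.norm_eq_abs, Real.norm_eq_abs]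
      linarith [abs_sub (f n x) (g x), le_abs_self (2 * bound x)]
    · exact (lintegral_rpow_enorm_lt_top_of_eLpNorm_lt_top hp0 hp (hbound.const_mul 2).2).ne
    · filter_upwards [hlim] with x hx
      have continuous_pow : Continuous fun s : ℝ => ‖s‖ₑ ^ p.toReal :=
        ENNReal.continuous_rpow_const.comp continuous_enorm
      simpa [hp_pos, Function.comp_def] using
        (continuous_pow.tendsto 0).comp (by simpa using hx.sub_const (g x))
  simp only [eLpNorm_eq_lintegral_rpow_enorm_toReal hp0 hp]
  simpa [hp_pos, Function.comp_def] using
    ((ENNReal.continuous_rpow_const (y := 1 / p.toReal)).tendsto 0).comp lintegral_tendsto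

lemma bdd_mul (hp : 1 ≤ p) (hp' : p ≠ ⊤) {C : ℝ} (hw : ∀ n, AEStronglyMeasurable (w n) μ)
    (hC : ∀ n, ∀ᵐ x ∂μ, |w n x| ≤ C)
    (hlim : ∀ᵐ x ∂μ, Tendsto (fun n => w n x) atTop (𝓝 (v x))) (h : LpTendsto p μ f g) :
    LpTendsto p μ (fun n x => w n x * f n x) (fun x => v x * g x) := by
  have hwg : LpTendsto p μ (fun n x => w n x * g x) (fun x => v x * g x) := by
    refine of_dominated hp' (fun n => (hw n).mul h.memLp_limit.1)
      (h.memLp_limit.abs.const_mul C) (fun n => ?_) (hlim.mono fun x hx => hx.mul_const (g x))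
    filter_upwards [hC n] with x hx
    rw [abs_mul]
    exact mul_le_mul_of_nonneg_right hx (abs_nonneg _)
  have bound_tendsto := ENNReal.Tendsto.const_mul (a := ENNReal.ofReal C) h.tendsto_eLpNorm_sub
    (Or.inr ENNReal.ofReal_ne_top)
  have hwsub : LpTendsto p μ (fun n x => w n x * (f n x - g x)) (fun _ => 0) := by
    refine of_eLpNorm_sub_le
      (fun n => ((h.memLp n).sub h.memLp_limit).mul' (memLp_top_of_bound (hw n) C (hC n)))
      MemLp.zero (fun n => ?_) (by simpa using bound_tendsto)
    refine eLpNorm_le_mul_eLpNorm_of_ae_le_mul ?_ p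
    filter_upwards [hC n] with x hx
    rw [sub_zero, norm_mul]
    gcongr
    exact hx
  simpa [mul_sub] using hwsub.add hp hwg

end LpTendsto

lemma tendsto_eLpNorm_translate_sub {E : Type*} [NormedAddCommGroup E] [MeasurableSpace E]
    [BorelSpace E] [SecondCountableTopology E] [LocallyCompactSpace E] {μ : Measure E}
    [μ.IsAddHaarMeasure] {p : ℝ≥0∞} (hp : 1 ≤ p) (hp' : p ≠ ⊤) {g : E → ℝ} (hg : MemLp g p μ)
    {a : ℕ → E} (ha : Tendsto a atTop (𝓝 0)) :
    Tendsto (fun n => eLpNorm (fun x => g (x - a n) - g x) p μ) atTop (𝓝 0) := by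
  have : Fact (1 ≤ p) := ⟨hp⟩
  have : Fact (p ≠ ⊤) := ⟨hp'⟩
  have vadd_tendsto :
      Tendsto (fun n => DomAddAct.mk (-a n) +ᵥ hg.toLp g) atTop (𝓝 (hg.toLp g)) := by
    have mk_tendsto : Tendsto (fun n => DomAddAct.mk (-a n)) atTop (𝓝 (DomAddAct.mk (0 : E))) :=
      (DomAddAct.continuous_mk.tendsto 0).comp (by simpa using ha.neg)
    have continuous_vadd : Continuous fun c : Eᵈᵃᵃ => c +ᵥ hg.toLp g := by fun_prop
    simpa [Function.comp_def] using (continuous_vadd.tendsto _).comp mk_tendsto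
  refine (tendsto_iff_edist_tendsto_0.1 vadd_tendsto).congr fun n => ?_
  rw [DomAddAct.mk_vadd_toLp, Lp.edist_toLp_toLp]
  refine congrArg (eLpNorm · p μ) ?_
  funext x
  simp [sub_eq_neg_add]

lemma LpTendsto.translate {E : Type*} [NormedAddCommGroup E] [MeasurableSpace E]
    [BorelSpace E] [SecondCountableTopology E] [LocallyCompactSpace E] {μ : Measure E}
    [μ.IsAddHaarMeasure] {p : ℝ≥0∞} (hp : 1 ≤ p) (hp' : p ≠ ⊤) {f : ℕ → E → ℝ} {g : E → ℝ}
    (h : LpTendsto p μ f g) {a : ℕ → E} (ha : Tendsto a atTop (𝓝 0)) :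
    LpTendsto p μ (fun n x => f n (x - a n)) g := by
  have shift (n : ℕ) := measurePreserving_sub_right μ (a n)
  refine of_eLpNorm_sub_le (fun n => (h.memLp n).comp_measurePreserving (shift n)) h.memLp_limit
    (B := fun n => eLpNorm (fun x => f n x - g x) p μ + eLpNorm (fun x => g (x - a n) - g x) p μ)
    (fun n => ?_) (by simpa using
      h.tendsto_eLpNorm_sub.add (tendsto_eLpNorm_translate_sub hp hp' h.memLp_limit ha))
  have triangle := eLpNorm_add_le
    ((h.aestronglyMeasurable_sub n).comp_measurePreserving (shift n))
    ((h.memLp_limit.comp_measurePreserving (shift n)).sub h.memLp_limit).1 hp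
  rw [eLpNorm_comp_measurePreserving (h.aestronglyMeasurable_sub n) (shift n)] at triangle
  refine le_of_eq_of_le (congrArg (eLpNorm · p μ) ?_) triangle
  funext x
  simp

lemma memLp_of_bdd_integrable {α : Type*} [MeasurableSpace α] {μ : Measure α} {f : α → ℝ}
    {M : ℝ} (hf : Integrable f μ) (hM : ∀ᵐ x ∂μ, |f x| ≤ M) {p : ℝ≥0∞} (hp : 1 ≤ p) :
    MemLp f p μ := by
  rcases eq_or_ne p ⊤ with rfl | hp'
  · exact memLp_top_of_bound hf.1 M hM
  have hp_one : 1 ≤ p.toReal := by simpa using ENNReal.toReal_mono hp' hp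
  rw [← integrable_norm_rpow_iff hf.1 (zero_lt_one.trans_le hp).ne' hp']
  refine (hf.norm.const_mul (M ^ (p.toReal - 1))).mono'
    (hf.1.norm.aemeasurable.pow_const _).aestronglyMeasurable ?_
  filter_upwards [hM] with x hx
  rw [Real.norm_of_nonneg (by positivity)]
  calc ‖f x‖ ^ p.toReal = ‖f x‖ ^ (p.toReal - 1) * ‖f x‖ ^ (1 : ℝ) := by
        rw [← Real.rpow_add_of_nonneg (norm_nonneg _) (by linarith) zero_le_one, sub_add_cancel]
    _ ≤ M ^ (p.toReal - 1) * ‖f x‖ := by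
        rw [Real.rpow_one]
        gcongr
        exact hx

instance holderTriple_six_six_three : ENNReal.HolderTriple 6 6 3 :=
  .of_toReal ⟨by norm_num, by norm_num, by norm_num⟩

instance holderTriple_three_six_two : ENNReal.HolderTriple 3 6 2 :=
  .of_toReal ⟨by norm_num, by norm_num, by norm_num⟩

instance holderTriple_six_fifths_six_one :
    ENNReal.HolderTriple (ENNReal.ofReal (6 / 5)) 6 1 :=
  .of_toReal ⟨by norm_num, by norm_num, by norm_num⟩

/-! ### Partial derivatives -/

section PartialDerivatives

variable {f g : E3 → ℝ} {x : E3}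

lemma continuous_pd (hf : ContDiff ℝ 1 f) (i : Fin 3) : Continuous (pd f i) :=
  (hf.continuous_fderiv one_ne_zero).clm_apply continuous_const

lemma contDiff_pd (hf : ContDiff ℝ 2 f) (i : Fin 3) : ContDiff ℝ 1 (pd f i) :=
  (hf.fderiv_right (m := 1) (by norm_num)).clm_apply contDiff_const

lemma hasCompactSupport_pd (hf : HasCompactSupport f) (i : Fin 3) : HasCompactSupport (pd f i) :=
  hf.fderiv_apply (𝕜 := ℝ) _

lemma pd_mul (hf : DifferentiableAt ℝ f x) (hg : DifferentiableAt ℝ g x) (i : Fin 3) :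
    pd (fun y => f y * g y) i x = f x * pd g i x + g x * pd f i x := by
  simp [pd, fderiv_fun_mul hf hg]

lemma pd_sum {ι : Type*} (s : Finset ι) {f : ι → E3 → ℝ}
    (hf : ∀ k ∈ s, DifferentiableAt ℝ (f k) x) (i : Fin 3) :
    pd (fun y => ∑ k ∈ s, f k y) i x = ∑ k ∈ s, pd (f k) i x := by
  simp [pd, fderiv_fun_sum hf]

lemma pd_comp {b : ℝ → ℝ} {b' : ℝ} (hb : HasDerivAt b b' (f x)) (hf : DifferentiableAt ℝ f x)
    (i : Fin 3) : pd (fun y => b (f y)) i x = b' * pd f i x := by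
  have hcomp : HasFDerivAt (fun y => b (f y)) (b' • fderiv ℝ f x) x :=
    hb.comp_hasFDerivAt x hf.hasFDerivAt
  simp [pd, hcomp.fderiv]

lemma pd_comp_sub_left (hf : Differentiable ℝ f) (i : Fin 3) (x y : E3) :
    pd (fun y => f (x - y)) i y = -pd f i (x - y) := by
  have hcomp : HasFDerivAt (fun y => f (x - y))
      ((fderiv ℝ f (x - y)).comp (-ContinuousLinearMap.id ℝ E3)) y :=
    (hf (x - y)).hasFDerivAt.comp y ((hasFDerivAt_id y).const_sub x)
  simp [pd, hcomp.fderiv]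

lemma pd_coord (i j : Fin 3) (x : E3) :
    pd (fun z : E3 => z j) i x = if i = j then 1 else 0 := by
  have coord_eq_proj : (fun z : E3 => z j) = (EuclideanSpace.proj j : E3 →L[ℝ] ℝ) := rfl
  rw [pd, coord_eq_proj, ContinuousLinearMap.fderiv]
  simp [eq_comm]

lemma fderiv_apply_eq_sum_pd (f : E3 → ℝ) (x a : E3) :
    fderiv ℝ f x a = ∑ j, a j * pd f j x := by
  have decomposition : a = ∑ j, a j • (EuclideanSpace.single j (1 : ℝ) : E3) := by
    ext i
    simp [Finset.sum_apply, Pi.single_apply]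
  conv_lhs => rw [decomposition]
  simp [pd]

lemma pd_pd_comm (hf : ContDiff ℝ 2 f) (i j : Fin 3) (x : E3) :
    pd (pd f i) j x = pd (pd f j) i x := by
  have hsymm : IsSymmSndFDerivAt ℝ f x :=
    hf.contDiffAt.isSymmSndFDerivAt (by rw [minSmoothness_of_isRCLikeNormedField])
  have hdiff : DifferentiableAt ℝ (fderiv ℝ f) x :=
    (hf.fderiv_right (m := 1) (by norm_num)).differentiable one_ne_zero x
  have pd_pd (a b : Fin 3) : pd (pd f a) b x =
      fderiv ℝ (fderiv ℝ f) x (EuclideanSpace.single b 1) (EuclideanSpace.single a 1) := by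
    have hderiv : HasFDerivAt (pd f a) _ x :=
      hdiff.hasFDerivAt.clm_apply (hasFDerivAt_const (EuclideanSpace.single a (1 : ℝ) : E3) x)
    rw [pd, hderiv.fderiv]
    simp
  rw [pd_pd, pd_pd, hsymm]

lemma integral_mul_pd_eq_neg (hf : ContDiff ℝ 1 f) (hg : ContDiff ℝ 1 g)
    (hgc : HasCompactSupport g) (i : Fin 3) :
    ∫ x, f x * pd g i x = -∫ x, pd f i x * g x := by
  refine integral_mul_fderiv_eq_neg_fderiv_mul_of_integrable ?_ ?_ ?_
    (fun x _ => hf.differentiable one_ne_zero x) (fun x _ => hg.differentiable one_ne_zero x)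
  · exact ((continuous_pd hf i).mul hg.continuous).integrable_of_hasCompactSupport hgc.mul_left
  · exact (hf.continuous.mul (continuous_pd hg i)).integrable_of_hasCompactSupport
      (hasCompactSupport_pd hgc i).mul_left
  · exact (hf.continuous.mul hg.continuous).integrable_of_hasCompactSupport hgc.mul_left

lemma integral_pd_mul_pd_swap (hf : ContDiff ℝ 2 f) (hg : ContDiff ℝ 1 g)
    (hgc : HasCompactSupport g) (i j : Fin 3) :
    ∫ x, pd f i x * pd g j x = ∫ x, pd f j x * pd g i x := by
  rw [integral_mul_pd_eq_neg (contDiff_pd hf i) hg hgc,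
    integral_mul_pd_eq_neg (contDiff_pd hf j) hg hgc]
  simp only [pd_pd_comm hf i j]

lemma sub_translate_eq_integral_pd (hf : ContDiff ℝ 1 f) (x a : E3) :
    f x - f (x - a) = ∫ t in Ioc (0 : ℝ) 1, ∑ j, a j * pd f j (x - t • a) := by
  have hderiv (t : ℝ) :
      HasDerivAt (fun t : ℝ => -f (x - t • a)) (∑ j, a j * pd f j (x - t • a)) t := by
    have hline : HasDerivAt (fun t : ℝ => x - t • a) (-((1 : ℝ) • a)) t :=
      ((hasDerivAt_id t).smul_const a).const_sub x
    have hcomp : HasDerivAt (fun t : ℝ => -f (x - t • a))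
        (-fderiv ℝ f (x - t • a) (-((1 : ℝ) • a))) t :=
      ((hf.differentiable one_ne_zero _).hasFDerivAt.comp_hasDerivAt t hline).neg
    simpa only [one_smul, map_neg, neg_neg, fderiv_apply_eq_sum_pd] using hcomp
  have hcont : Continuous fun t : ℝ => ∑ j, a j * pd f j (x - t • a) :=
    continuous_finsetSum _ fun j _ =>
      continuous_const.mul ((continuous_pd hf j).comp (by fun_prop))
  have ftc := intervalIntegral.integral_eq_sub_of_hasDerivAt (fun t _ => hderiv t)
    (hcont.intervalIntegrable 0 1)
  rw [← intervalIntegral.integral_of_le zero_le_one, ftc, one_smul, zero_smul, sub_zero]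
  ring

end PartialDerivatives

/-! ### Integrals against convolutions -/

section Convolution

variable {G : Type*} [AddGroup G] [MeasurableSpace G] [MeasurableAdd₂ G] [MeasurableNeg G]
  {μ : Measure G} [SFinite μ] [μ.IsAddRightInvariant] {κ W a : G → ℝ} {C : ℝ}

lemma integrable_mul_convolution_integrand (hκ : Integrable κ μ) (hW : AEStronglyMeasurable W μ)
    (hC : ∀ x, |W x| ≤ C) (ha : Integrable a μ) :
    Integrable (fun p : G × G => W p.1 * (κ p.2 * a (p.1 - p.2))) (μ.prod μ) :=
  (hκ.convolution_integrand (ContinuousLinearMap.lsmul ℝ ℝ) ha).bdd_mul (c := C) hW.comp_fst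
    (Eventually.of_forall fun p => hC p.1)

lemma integrable_mul_convolution (hκ : Integrable κ μ) (hW : AEStronglyMeasurable W μ)
    (hC : ∀ x, |W x| ≤ C) (ha : Integrable a μ) :
    Integrable (fun x => W x * ∫ y, κ y * a (x - y) ∂μ) μ := by
  simpa only [integral_const_mul] using
    (integrable_mul_convolution_integrand hκ hW hC ha).integral_prod_left

lemma integrable_kernel_mul_integral_translate (hκ : Integrable κ μ)
    (hW : AEStronglyMeasurable W μ) (hC : ∀ x, |W x| ≤ C) (ha : Integrable a μ) :
    Integrable (fun y => κ y * ∫ x, W x * a (x - y) ∂μ) μ := by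
  simpa only [mul_left_comm (W _), integral_const_mul] using
    (integrable_mul_convolution_integrand hκ hW hC ha).integral_prod_right

lemma integral_mul_convolution_eq (hκ : Integrable κ μ) (hW : AEStronglyMeasurable W μ)
    (hC : ∀ x, |W x| ≤ C) (ha : Integrable a μ) :
    ∫ x, W x * ∫ y, κ y * a (x - y) ∂μ ∂μ = ∫ y, κ y * ∫ x, W x * a (x - y) ∂μ ∂μ := by
  have swap := integral_integral_swap (f := fun x y => W x * (κ y * a (x - y)))
    (integrable_mul_convolution_integrand hκ hW hC ha)
  simp only [integral_const_mul] at swap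
  simp only [swap, mul_left_comm (W _), integral_const_mul]

lemma abs_integral_mul_convolution_le (hκ : Integrable κ μ) (hW : AEStronglyMeasurable W μ)
    (hC : ∀ x, |W x| ≤ C) (ha : Integrable a μ) :
    |∫ x, W x * ∫ y, κ y * a (x - y) ∂μ ∂μ| ≤ (∫ y, |κ y| ∂μ) * (C * ∫ x, |a x| ∂μ) := by
  have inner_le (y : G) : |∫ x, W x * a (x - y) ∂μ| ≤ C * ∫ x, |a x| ∂μ := by
    rw [← integral_sub_right_eq_self (fun x => |a x|) y, ← integral_const_mul,
      ← Real.norm_eq_abs]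
    refine norm_integral_le_of_norm_le ((ha.comp_sub_right y).norm.const_mul C)
      (Eventually.of_forall fun x => ?_)
    rw [norm_mul]
    exact mul_le_mul_of_nonneg_right (hC x) (norm_nonneg _)
  rw [integral_mul_convolution_eq hκ hW hC ha, ← integral_mul_const, ← Real.norm_eq_abs]
  refine norm_integral_le_of_norm_le (hκ.norm.mul_const _) (Eventually.of_forall fun y => ?_)
  rw [norm_mul]
  exact mul_le_mul_of_nonneg_left (inner_le y) (norm_nonneg _)

end Convolution

/-! ### Mollification -/

/-- The scale of the `k`-th mollifier. -/
def mollifierScale (k : ℕ) : ℝ := 1 / ((k : ℝ) + 1)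

lemma mollifierScale_pos (k : ℕ) : 0 < mollifierScale k := by
  unfold mollifierScale
  positivity

lemma tendsto_mollifierScale : Tendsto mollifierScale atTop (𝓝 0) :=
  tendsto_one_div_add_atTop_nhds_zero_nat

lemma tendsto_mollifierScale_smul (z : E3) :
    Tendsto (fun k => mollifierScale k • z) atTop (𝓝 0) := by
  simpa using tendsto_mollifierScale.smul_const z

/-- The bump function equal to `1` on the ball of radius `mollifierScale k` and supported in the
ball of twice that radius; the constant ratio of radii makes the family self-similar. -/
def mollifierBump (k : ℕ) : ContDiffBump (0 : E3) :=
  ⟨mollifierScale k, 2 * mollifierScale k, mollifierScale_pos k,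
    by linarith [mollifierScale_pos k]⟩

/-- The `k`-th element of a smooth approximate identity on `ℝ³`. -/
def mollifier (k : ℕ) : E3 → ℝ := (mollifierBump k).normed volume

lemma contDiff_mollifier (k : ℕ) : ContDiff ℝ ∞ (mollifier k) := (mollifierBump k).contDiff_normed

lemma differentiable_mollifier (k : ℕ) : Differentiable ℝ (mollifier k) :=
  (contDiff_mollifier k).differentiable (by simp)

lemma hasCompactSupport_mollifier (k : ℕ) : HasCompactSupport (mollifier k) :=
  (mollifierBump k).hasCompactSupport_normed

lemma mollifier_nonneg (k : ℕ) (x : E3) : 0 ≤ mollifier k x := (mollifierBump k).nonneg_normed x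

lemma integral_mollifier (k : ℕ) : ∫ x, mollifier k x = 1 := (mollifierBump k).integral_normed

lemma integrable_mollifier (k : ℕ) : Integrable (mollifier k) :=
  (contDiff_mollifier k).continuous.integrable_of_hasCompactSupport (hasCompactSupport_mollifier k)

lemma continuous_pd_mollifier (k : ℕ) (i : Fin 3) : Continuous (pd (mollifier k) i) :=
  continuous_pd ((contDiff_mollifier k).of_le (by simp)) i

lemma hasCompactSupport_pd_mollifier (k : ℕ) (i : Fin 3) :
    HasCompactSupport (pd (mollifier k) i) :=
  hasCompactSupport_pd (hasCompactSupport_mollifier k) i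

lemma integrable_pd_mollifier (k : ℕ) (i : Fin 3) : Integrable (pd (mollifier k) i) :=
  (continuous_pd_mollifier k i).integrable_of_hasCompactSupport (hasCompactSupport_pd_mollifier k i)

lemma exists_abs_pd_mollifier_le (k : ℕ) (i : Fin 3) : ∃ C, ∀ x, |pd (mollifier k) i x| ≤ C :=
  (continuous_pd_mollifier k i).bounded_above_of_compact_support
    (hasCompactSupport_pd_mollifier k i)

lemma mollifierBump_eq_comp_smul (k : ℕ) (y : E3) :
    mollifierBump k y = mollifierBump 0 ((mollifierScale k)⁻¹ • y) := by
  have hk := (mollifierScale_pos k).ne'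
  have scale_zero : mollifierScale 0 = 1 := by simp [mollifierScale]
  simp only [ContDiffBump.apply, mollifierBump, sub_zero, scale_zero, inv_one, one_smul]
  rw [mul_div_cancel_right₀ _ hk, mul_one, div_one]

lemma mollifier_eq_comp_smul (k : ℕ) (y : E3) :
    mollifier k y = (mollifierScale k)⁻¹ ^ 3 * mollifier 0 ((mollifierScale k)⁻¹ • y) := by
  have hk := mollifierScale_pos k
  have integral_bump : ∫ x, mollifierBump k x = mollifierScale k ^ 3 * ∫ x, mollifierBump 0 x := by
    simp only [mollifierBump_eq_comp_smul k]
    rw [Measure.integral_comp_inv_smul_of_nonneg volume (fun x => mollifierBump 0 x) hk.le]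
    simp
  rw [mollifier, mollifier, ContDiffBump.normed_def, ContDiffBump.normed_def,
    ← mollifierBump_eq_comp_smul, integral_bump]
  field_simp

lemma mollifier_smul (k : ℕ) (z : E3) :
    mollifier k (mollifierScale k • z) = (mollifierScale k)⁻¹ ^ 3 * mollifier 0 z := by
  rw [mollifier_eq_comp_smul, inv_smul_smul₀ (mollifierScale_pos k).ne']

lemma pd_mollifier_smul (k : ℕ) (i : Fin 3) (z : E3) :
    pd (mollifier k) i (mollifierScale k • z) =
      (mollifierScale k)⁻¹ ^ 3 * ((mollifierScale k)⁻¹ * pd (mollifier 0) i z) := by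
  have hdiff : Differentiable ℝ fun y : E3 => mollifier 0 ((mollifierScale k)⁻¹ • y) :=
    (differentiable_mollifier 0).comp (by fun_prop)
  rw [pd, funext (mollifier_eq_comp_smul k), fderiv_const_mul (hdiff _), fderiv_comp_smul,
    inv_smul_smul₀ (mollifierScale_pos k).ne']
  rfl

lemma integral_eq_of_comp_mollifierScale_smul {k : ℕ} {κ F : E3 → ℝ}
    (h : ∀ z, κ (mollifierScale k • z) = (mollifierScale k)⁻¹ ^ 3 * F z) :
    ∫ y, κ y = ∫ z, F z := by
  have hk := mollifierScale_pos k
  have scaling := Measure.integral_comp_smul_of_nonneg volume κ (mollifierScale k) (hR := hk.le)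
  simp only [h, integral_const_mul, finrank_euclideanSpace, Fintype.card_fin, smul_eq_mul,
    ← inv_pow] at scaling
  exact (mul_left_cancel₀ (by positivity) scaling).symm

lemma integral_mollifier_mul (k : ℕ) (F : E3 → ℝ) :
    ∫ y, mollifier k y * F y = ∫ z, mollifier 0 z * F (mollifierScale k • z) :=
  integral_eq_of_comp_mollifierScale_smul fun z => by rw [mollifier_smul, mul_assoc]

lemma integral_pd_mollifier_mul (k : ℕ) (i : Fin 3) (F : E3 → ℝ) :
    ∫ y, pd (mollifier k) i y * F y =
      ∫ z, pd (mollifier 0) i z * ((mollifierScale k)⁻¹ * F (mollifierScale k • z)) :=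
  integral_eq_of_comp_mollifierScale_smul fun z => by
    rw [pd_mollifier_smul]
    ring

lemma integral_pd_mollifier_mul_coord (i j : Fin 3) :
    ∫ z, pd (mollifier 0) i z * z j = if i = j then -1 else 0 := by
  have by_parts := integral_mul_pd_eq_neg (f := fun z : E3 => z j) (by fun_prop)
    ((contDiff_mollifier 0).of_le (by norm_num)) (hasCompactSupport_mollifier 0) i
  simp only [pd_coord, integral_const_mul, integral_mollifier] at by_parts
  simp only [fun z : E3 => mul_comm (pd (mollifier 0) i z) (z j), by_parts]
  split_ifs <;> simp

lemma integral_pd_mollifier_mul_sum_coord (i : Fin 3) (L : Fin 3 → ℝ) :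
    ∫ z, pd (mollifier 0) i z * ∑ j, z j * L j = -L i := by
  have integrable_coord (j : Fin 3) : Integrable fun z : E3 => pd (mollifier 0) i z * z j :=
    ((continuous_pd_mollifier 0 i).mul (by fun_prop)).integrable_of_hasCompactSupport
      (hasCompactSupport_pd_mollifier 0 i).mul_right
  simp only [Finset.mul_sum, ← mul_assoc]
  rw [integral_finsetSum _ fun j _ => (integrable_coord j).mul_const (L j)]
  simp [integral_mul_const, integral_pd_mollifier_mul_coord]

lemma isTest_mollifier_sub (k : ℕ) (x : E3) : IsTest univ fun y => mollifier k (x - y) :=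
  ⟨(contDiff_mollifier k).comp (contDiff_const.sub contDiff_id),
    (hasCompactSupport_mollifier k).comp_homeomorph (Homeomorph.subLeft x), subset_univ _⟩

lemma pd_mollifier_sub (k : ℕ) (i : Fin 3) (x y : E3) :
    pd (fun y => mollifier k (x - y)) i y = -pd (mollifier k) i (x - y) :=
  pd_comp_sub_left (differentiable_mollifier k) i x y

lemma integral_mul_comp_sub_eq (κ f : E3 → ℝ) (x : E3) :
    ∫ y, κ y * f (x - y) = ∫ y, f y * κ (x - y) := by
  rw [← integral_sub_left_eq_self (fun y => f y * κ (x - y)) volume x]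
  simp [mul_comm]

/-- The mollification `x ↦ ∫ mollifier k y * f (x - y) dy` of `f`. -/
def mollify (k : ℕ) (f : E3 → ℝ) : E3 → ℝ :=
  mollifier k ⋆[ContinuousLinearMap.lsmul ℝ ℝ, volume] f

lemma mollify_apply (k : ℕ) (f : E3 → ℝ) (x : E3) :
    mollify k f x = ∫ y, mollifier k y * f (x - y) := rfl

lemma contDiff_mollify (k : ℕ) {f : E3 → ℝ} (hf : LocallyIntegrable f) :
    ContDiff ℝ ∞ (mollify k f) :=
  (hasCompactSupport_mollifier k).contDiff_convolution_left _ (contDiff_mollifier k) hf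

lemma hasCompactSupport_mollify (k : ℕ) {f : E3 → ℝ} (hf : HasCompactSupport f) :
    HasCompactSupport (mollify k f) :=
  HasCompactSupport.convolution _ (hasCompactSupport_mollifier k) hf

lemma pd_mollify (k : ℕ) {f : E3 → ℝ} (hf : LocallyIntegrable f) (i : Fin 3) (x : E3) :
    pd (mollify k f) i x = ∫ y, pd (mollifier k) i y * f (x - y) := by
  have hmoll : ContDiff ℝ 1 (mollifier k) := (contDiff_mollifier k).of_le (by norm_num)
  have hexists := ((hasCompactSupport_mollifier k).fderiv ℝ).convolutionExists_left
    ((ContinuousLinearMap.lsmul ℝ ℝ).precompL E3) (hmoll.continuous_fderiv one_ne_zero) hf x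
  rw [pd, mollify,
    ((hasCompactSupport_mollifier k).hasFDerivAt_convolution_left _ hmoll hf x).fderiv,
    convolution_def, ContinuousLinearMap.integral_apply hexists]
  rfl

lemma tendsto_mollify_ae {f : E3 → ℝ} (hf : LocallyIntegrable f) :
    ∀ᵐ x, Tendsto (fun k => mollify k f x) atTop (𝓝 (f x)) :=
  ContDiffBump.ae_convolution_tendsto_right_of_locallyIntegrable (φ := mollifierBump) (K := 2)
    (by simpa [mollifierBump] using tendsto_mollifierScale.const_mul 2)
    (Eventually.of_forall fun _ => le_rfl) hf

lemma abs_mollify_le (k : ℕ) {f : E3 → ℝ} {C : ℝ} (hC : ∀ᵐ x, |f x| ≤ C) (x : E3) :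
    |mollify k f x| ≤ C := by
  have hC_translate : ∀ᵐ y, |f (x - y)| ≤ C := (quasiMeasurePreserving_sub_left volume x).ae hC
  calc |mollify k f x| ≤ ∫ y, mollifier k y * C := by
        rw [mollify_apply, ← Real.norm_eq_abs]
        refine norm_integral_le_of_norm_le ((integrable_mollifier k).mul_const C) ?_
        filter_upwards [hC_translate] with y hy
        rw [norm_mul, Real.norm_of_nonneg (mollifier_nonneg k y)]
        exact mul_le_mul_of_nonneg_left hy (mollifier_nonneg k y)
    _ = C := by rw [integral_mul_const, integral_mollifier, one_mul]

lemma mollify_nonneg (k : ℕ) {f : E3 → ℝ} (hf : ∀ x, 0 ≤ f x) (x : E3) : 0 ≤ mollify k f x :=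
  integral_nonneg fun y => mul_nonneg (mollifier_nonneg k y) (hf _)

lemma pd_mollify_of_hasWeakGradOn (k : ℕ) {F : E3 → ℝ} {dF : E3 → Fin 3 → ℝ}
    (hF : LocallyIntegrable F) (hw : HasWeakGradOn univ F dF) (i : Fin 3) (x : E3) :
    pd (mollify k F) i x = mollify k (fun y => dF y i) x := by
  have weak := hw _ (isTest_mollifier_sub k x) i
  simp only [setIntegral_univ, pd_mollifier_sub, mul_neg, integral_neg, neg_inj] at weak
  rw [pd_mollify k hF, mollify_apply, integral_mul_comp_sub_eq, weak,
    integral_mul_comp_sub_eq (mollifier k) (fun y => dF y i)]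

/-! ### The commutator of mollification and transport -/

/-- The trilinear pairing of a weight with two functions translated independently. -/
def translatePairing (w R f : E3 → ℝ) (a b : E3) : ℝ := ∫ x, w x * (R (x - a) * f (x - b))

section TranslatePairing

variable {w R f V : E3 → ℝ} {C : ℝ}

lemma abs_translatePairing_le (hC : ∀ x, |w x| ≤ C) (hR : MemLp R 2) (hf : MemLp f 2)
    (a b : E3) : |translatePairing w R f a b| ≤ C * ((∫ x, R x ^ 2) + ∫ x, f x ^ 2) := by
  have hR_sq : Integrable (fun x => R (x - a) ^ 2) := hR.integrable_sq.comp_sub_right a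
  have hf_sq : Integrable (fun x => f (x - b) ^ 2) := hf.integrable_sq.comp_sub_right b
  rw [← integral_sub_right_eq_self (fun x => R x ^ 2) a,
    ← integral_sub_right_eq_self (fun x => f x ^ 2) b, ← integral_add hR_sq hf_sq,
    ← integral_const_mul, ← Real.norm_eq_abs]
  refine norm_integral_le_of_norm_le ((hR_sq.add hf_sq).const_mul C)
    (Eventually.of_forall fun x => ?_)
  rw [norm_mul]
  refine mul_le_mul (hC x) ?_ (norm_nonneg _) ((abs_nonneg _).trans (hC 0))
  rw [norm_mul, Real.norm_eq_abs, Real.norm_eq_abs]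
  nlinarith [sq_nonneg (|R (x - a)| - |f (x - b)|), sq_abs (R (x - a)), sq_abs (f (x - b))]

lemma stronglyMeasurable_translatePairing (hw : Measurable w) (hR : Measurable R)
    (hf : Measurable f) {β : Type*} [MeasurableSpace β] {a b : β → E3} (ha : Measurable a)
    (hb : Measurable b) : StronglyMeasurable fun z => translatePairing w R f (a z) (b z) := by
  refine StronglyMeasurable.integral_prod_right
    (f := fun z x => w x * (R (x - a z) * f (x - b z))) (Measurable.stronglyMeasurable ?_)
  exact (hw.comp measurable_snd).mul
    ((hR.comp (measurable_snd.sub (ha.comp measurable_fst))).mul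
      (hf.comp (measurable_snd.sub (hb.comp measurable_fst))))

lemma tendsto_translatePairing {w f : ℕ → E3 → ℝ} {w' d : E3 → ℝ}
    (hw : ∀ k, Continuous (w k)) (hC : ∀ k x, |w k x| ≤ C)
    (hlim : ∀ᵐ x, Tendsto (fun k => w k x) atTop (𝓝 (w' x))) (hR : MemLp R 2)
    (hf : LpTendsto 2 volume f d) {a b : ℕ → E3} (ha : Tendsto a atTop (𝓝 0))
    (hb : Tendsto b atTop (𝓝 0)) :
    Tendsto (fun k => translatePairing (w k) R (f k) (a k) (b k)) atTop
      (𝓝 (∫ x, w' x * (R x * d x))) := by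
  have hR_translate := (LpTendsto.const hR).translate one_le_two ENNReal.ofNat_ne_top ha
  have hf_translate := hf.translate one_le_two ENNReal.ofNat_ne_top hb
  exact (LpTendsto.bdd_mul le_rfl ENNReal.one_ne_top (fun k => (hw k).aestronglyMeasurable)
    (fun k => Eventually.of_forall (hC k)) hlim
    (LpTendsto.mul le_rfl hR_translate hf_translate)).tendsto_integral

lemma LpTendsto.exists_integral_sq_le {α : Type*} [MeasurableSpace α] {μ : Measure α}
    {f : ℕ → α → ℝ} {g : α → ℝ} (h : LpTendsto 2 μ f g) : ∃ B, ∀ k, ∫ x, f k x ^ 2 ∂μ ≤ B := by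
  obtain ⟨B, hB⟩ := (LpTendsto.mul le_rfl h h).tendsto_integral.bddAbove_range
  exact ⟨B, fun k => by simpa only [sq] using hB ⟨k, rfl⟩⟩

lemma exists_abs_translatePairing_le {w f : ℕ → E3 → ℝ} {d : E3 → ℝ}
    (hC : ∀ k x, |w k x| ≤ C) (hR : MemLp R 2) (hf : LpTendsto 2 volume f d) :
    ∃ B, ∀ k a b, |translatePairing (w k) R (f k) a b| ≤ B := by
  obtain ⟨B, hB⟩ := hf.exists_integral_sq_le
  refine ⟨C * ((∫ x, R x ^ 2) + B), fun k a b =>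
    (abs_translatePairing_le (hC k) hR (hf.memLp k) a b).trans ?_⟩
  have hC_nonneg : 0 ≤ C := (abs_nonneg _).trans (hC 0 0)
  gcongr
  exact hB k

lemma integral_mul_mollify_mul_eq (hw : Continuous w) (hC : ∀ x, |w x| ≤ C) (hR : Integrable R)
    (hf : Continuous f) (hfc : HasCompactSupport f) (k : ℕ) :
    ∫ x, w x * mollify k R x * f x =
      ∫ z, mollifier 0 z * translatePairing w R f (mollifierScale k • z) 0 := by
  obtain ⟨b, hb⟩ := hf.bounded_above_of_compact_support hfc
  have hwf_le (x : E3) : |w x * f x| ≤ C * b := by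
    rw [abs_mul]
    exact mul_le_mul (hC x) (hb x) (abs_nonneg _) ((abs_nonneg _).trans (hC 0))
  calc ∫ x, w x * mollify k R x * f x
      = ∫ x, w x * f x * ∫ y, mollifier k y * R (x - y) := by
        simp only [mollify_apply, mul_right_comm]
    _ = ∫ y, mollifier k y * ∫ x, w x * f x * R (x - y) :=
        integral_mul_convolution_eq (integrable_mollifier k) (hw.mul hf).aestronglyMeasurable
          hwf_le hR
    _ = _ := by
        rw [integral_mollifier_mul]
        simp only [translatePairing, sub_zero, mul_assoc, mul_comm (f _)]

lemma tendsto_integral_mul_mollify_mul {w f : ℕ → E3 → ℝ} {w' d : E3 → ℝ}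
    (hw : ∀ k, Continuous (w k)) (hC : ∀ k x, |w k x| ≤ C)
    (hlim : ∀ᵐ x, Tendsto (fun k => w k x) atTop (𝓝 (w' x))) (hRm : Measurable R)
    (hR : Integrable R) (hR2 : MemLp R 2) (hfcont : ∀ k, Continuous (f k))
    (hfc : ∀ k, HasCompactSupport (f k)) (hf : LpTendsto 2 volume f d) :
    Tendsto (fun k => ∫ x, w k x * mollify k R x * f k x) atTop
      (𝓝 (∫ x, w' x * (R x * d x))) := by
  obtain ⟨B, hB⟩ := exists_abs_translatePairing_le hC hR2 hf
  have limit_eq : ∫ x, w' x * (R x * d x) =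
      ∫ z, mollifier 0 z * ∫ x, w' x * (R x * d x) := by
    rw [integral_mul_const, integral_mollifier, one_mul]
  simp only [integral_mul_mollify_mul_eq (hw _) (hC _) hR (hfcont _) (hfc _)]
  rw [limit_eq]
  refine tendsto_integral_of_dominated_convergence (fun z => mollifier 0 z * B) (fun k => ?_)
    ((integrable_mollifier 0).mul_const B) (fun k => Eventually.of_forall fun z => ?_)
    (Eventually.of_forall fun z => tendsto_const_nhds.mul ?_)
  · exact (integrable_mollifier 0).1.mul (stronglyMeasurable_translatePairing (hw k).measurable
      hRm (hfcont k).measurable (by fun_prop) measurable_const).aestronglyMeasurable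
  · rw [norm_mul, Real.norm_of_nonneg (mollifier_nonneg 0 z)]
    exact mul_le_mul_of_nonneg_left (hB k _ _) (mollifier_nonneg 0 z)
  · exact tendsto_translatePairing hw hC hlim hR2 hf (tendsto_mollifierScale_smul z)
      tendsto_const_nhds

end TranslatePairing

/-- The pairing of `w` and the translate `R (· - ε • z)` with the difference quotient
`(V - V (· - ε • z)) / ε`, written through the derivative of `V` along the segment so that it
makes sense uniformly as `ε → 0`. -/
def differenceQuotientPairing (w R V : E3 → ℝ) (ε : ℝ) (z : E3) : ℝ :=
  ∫ t in Ioc (0 : ℝ) 1, ∑ j, z j * translatePairing w R (pd V j) (ε • z) (t • ε • z)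

section DifferenceQuotientPairing

variable {w R V : E3 → ℝ} {C : ℝ}

lemma integrable_mul_translate_mul_pd_segment (hw : Continuous w) (hC : ∀ x, |w x| ≤ C)
    (hR : Integrable R) (hV : ContDiff ℝ 1 V) (hVc : HasCompactSupport V) (a : E3) (j : Fin 3) :
    Integrable (fun p : E3 × ℝ => a j * (w p.1 * (R (p.1 - a) * pd V j (p.1 - p.2 • a))))
      (volume.prod (volume.restrict (Ioc (0 : ℝ) 1))) := by
  obtain ⟨B, hB⟩ := (continuous_pd hV j).bounded_above_of_compact_support
    (hasCompactSupport_pd hVc j)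
  have hpd : Continuous fun p : E3 × ℝ => pd V j (p.1 - p.2 • a) :=
    (continuous_pd hV j).comp (by fun_prop)
  exact ((((hR.comp_sub_right a).comp_fst _).mul_bdd (c := B) hpd.aestronglyMeasurable
    (Eventually.of_forall fun p => hB _)).bdd_mul (c := C)
    (hw.comp continuous_fst).aestronglyMeasurable
    (Eventually.of_forall fun p => hC _)).const_mul _

lemma integral_mul_translate_mul_sub_eq (hw : Continuous w) (hC : ∀ x, |w x| ≤ C)
    (hR : Integrable R) (hV : ContDiff ℝ 1 V) (hVc : HasCompactSupport V) (a : E3) :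
    ∫ x, w x * (R (x - a) * (V x - V (x - a))) =
      ∫ t in Ioc (0 : ℝ) 1, ∑ j, a j * translatePairing w R (pd V j) a (t • a) := by
  have integrable_term := integrable_mul_translate_mul_pd_segment hw hC hR hV hVc a
  calc ∫ x, w x * (R (x - a) * (V x - V (x - a)))
      = ∫ x, ∫ t in Ioc (0 : ℝ) 1, ∑ j, a j * (w x * (R (x - a) * pd V j (x - t • a))) := by
        simp only [sub_translate_eq_integral_pd hV, ← integral_const_mul, Finset.mul_sum,
          mul_left_comm (a _)]
    _ = ∫ t in Ioc (0 : ℝ) 1, ∫ x, ∑ j, a j * (w x * (R (x - a) * pd V j (x - t • a))) :=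
        integral_integral_swap (integrable_finsetSum _ fun j _ => integrable_term j)
    _ = _ := by
        refine integral_congr_ae ?_
        filter_upwards [ae_all_iff.2 fun j => (integrable_term j).prod_left_ae] with t ht
        rw [integral_finsetSum _ fun j _ => ht j]
        simp only [integral_const_mul, translatePairing]

lemma inv_mul_integral_mul_translate_mul_sub_eq (hw : Continuous w) (hC : ∀ x, |w x| ≤ C)
    (hR : Integrable R) (hV : ContDiff ℝ 1 V) (hVc : HasCompactSupport V) {ε : ℝ} (hε : ε ≠ 0)
    (z : E3) :
    ε⁻¹ * ∫ x, w x * (R (x - ε • z) * (V x - V (x - ε • z))) =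
      differenceQuotientPairing w R V ε z := by
  rw [integral_mul_translate_mul_sub_eq hw hC hR hV hVc, ← integral_const_mul]
  simp only [differenceQuotientPairing, PiLp.smul_apply, smul_eq_mul, Finset.mul_sum, mul_assoc,
    inv_mul_cancel_left₀ hε]

lemma stronglyMeasurable_differenceQuotientPairing (hw : Continuous w) (hR : Measurable R)
    (hV : ContDiff ℝ 1 V) (ε : ℝ) : StronglyMeasurable (differenceQuotientPairing w R V ε) := by
  refine StronglyMeasurable.integral_prod_right (f := fun (z : E3) (t : ℝ) =>
    ∑ j, z j * translatePairing w R (pd V j) (ε • z) (t • ε • z)) ?_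
  refine Finset.stronglyMeasurable_fun_sum _ fun j _ => ?_
  have hcoord : Measurable fun p : E3 × ℝ => p.1 j := by fun_prop
  exact hcoord.stronglyMeasurable.mul (stronglyMeasurable_translatePairing hw.measurable hR
    (continuous_pd hV j).measurable (by fun_prop) (by fun_prop))

lemma norm_sum_mul_translatePairing_le {B : Fin 3 → ℝ}
    (hB : ∀ j a b, |translatePairing w R (pd V j) a b| ≤ B j) (ε t : ℝ) (z : E3) :
    ‖∑ j, z j * translatePairing w R (pd V j) (ε • z) (t • ε • z)‖ ≤ ∑ j, |z j| * B j := by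
  refine (norm_sum_le _ _).trans (Finset.sum_le_sum fun j _ => ?_)
  rw [norm_mul]
  exact mul_le_mul_of_nonneg_left (hB j _ _) (norm_nonneg _)

lemma abs_differenceQuotientPairing_le {B : Fin 3 → ℝ}
    (hB : ∀ j a b, |translatePairing w R (pd V j) a b| ≤ B j) (ε : ℝ) (z : E3) :
    |differenceQuotientPairing w R V ε z| ≤ ∑ j, |z j| * B j := by
  simpa [differenceQuotientPairing] using norm_integral_le_of_norm_le_const
    (μ := volume.restrict (Ioc (0 : ℝ) 1))
    (Eventually.of_forall fun t => norm_sum_mul_translatePairing_le hB ε t z)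

end DifferenceQuotientPairing

section Commutator

variable {w V : ℕ → E3 → ℝ} {w' R : E3 → ℝ} {d : E3 → Fin 3 → ℝ} {C : ℝ}

lemma exists_abs_translatePairing_pd_le (hC : ∀ k x, |w k x| ≤ C) (hR2 : MemLp R 2)
    (hpd : ∀ j, LpTendsto 2 volume (fun k => pd (V k) j) (fun x => d x j)) :
    ∃ B : Fin 3 → ℝ, ∀ k j a b, |translatePairing (w k) R (pd (V k) j) a b| ≤ B j := by
  choose B hB using fun j => exists_abs_translatePairing_le hC hR2 (hpd j)
  exact ⟨B, fun k j a b => hB j k a b⟩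

lemma tendsto_differenceQuotientPairing (hw : ∀ k, Continuous (w k)) (hC : ∀ k x, |w k x| ≤ C)
    (hlim : ∀ᵐ x, Tendsto (fun k => w k x) atTop (𝓝 (w' x))) (hRm : Measurable R)
    (hR2 : MemLp R 2) (hV : ∀ k, ContDiff ℝ 1 (V k))
    (hpd : ∀ j, LpTendsto 2 volume (fun k => pd (V k) j) (fun x => d x j)) (z : E3) :
    Tendsto (fun k => differenceQuotientPairing (w k) R (V k) (mollifierScale k) z) atTop
      (𝓝 (∑ j, z j * ∫ x, w' x * (R x * d x j))) := by
  obtain ⟨B, hB⟩ := exists_abs_translatePairing_pd_le hC hR2 hpd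
  have limit_eq : ∑ j, z j * ∫ x, w' x * (R x * d x j) =
      ∫ _ in Ioc (0 : ℝ) 1, ∑ j, z j * ∫ x, w' x * (R x * d x j) := by simp
  rw [limit_eq]
  refine tendsto_integral_of_dominated_convergence (fun _ => ∑ j, |z j| * B j) (fun k => ?_)
    (by simp) (fun k => Eventually.of_forall fun t =>
      norm_sum_mul_translatePairing_le (hB k) (mollifierScale k) t z)
    (Eventually.of_forall fun t => ?_)
  · refine (Finset.stronglyMeasurable_fun_sum _ fun j _ =>
      StronglyMeasurable.const_mul ?_ _).aestronglyMeasurable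
    exact stronglyMeasurable_translatePairing (hw k).measurable hRm
      (continuous_pd (hV k) j).measurable measurable_const (by fun_prop)
  · refine tendsto_finsetSum _ fun j _ => tendsto_const_nhds.mul ?_
    exact tendsto_translatePairing hw hC hlim hR2 (hpd j) (tendsto_mollifierScale_smul z)
      (by simpa using (tendsto_mollifierScale_smul z).const_smul t)

lemma tendsto_integral_pd_mollifier_mul_commutator (hw : ∀ k, Continuous (w k))
    (hC : ∀ k x, |w k x| ≤ C)
    (hlim : ∀ᵐ x, Tendsto (fun k => w k x) atTop (𝓝 (w' x))) (hRm : Measurable R)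
    (hR : Integrable R) (hR2 : MemLp R 2) (hV : ∀ k, ContDiff ℝ 1 (V k))
    (hVc : ∀ k, HasCompactSupport (V k))
    (hpd : ∀ j, LpTendsto 2 volume (fun k => pd (V k) j) (fun x => d x j)) (i : Fin 3) :
    Tendsto (fun k => ∫ y, pd (mollifier k) i y *
      ∫ x, w k x * (R (x - y) * (V k x - V k (x - y)))) atTop
      (𝓝 (-∫ x, w' x * (R x * d x i))) := by
  obtain ⟨B, hB⟩ := exists_abs_translatePairing_pd_le hC hR2 hpd
  have hkernel := continuous_pd_mollifier 0 i
  have rescaled (k : ℕ) : ∫ y, pd (mollifier k) i y *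
        ∫ x, w k x * (R (x - y) * (V k x - V k (x - y))) =
      ∫ z, pd (mollifier 0) i z *
        differenceQuotientPairing (w k) R (V k) (mollifierScale k) z := by
    rw [integral_pd_mollifier_mul]
    simp only [inv_mul_integral_mul_translate_mul_sub_eq (hw k) (hC k) hR (hV k) (hVc k)
      (mollifierScale_pos k).ne']
  simp only [rescaled]
  rw [← integral_pd_mollifier_mul_sum_coord i fun j => ∫ x, w' x * (R x * d x j)]
  refine tendsto_integral_of_dominated_convergence
    (fun z => |pd (mollifier 0) i z| * ∑ j, |z j| * B j) (fun k => ?_) ?_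
    (fun k => Eventually.of_forall fun z => ?_)
    (Eventually.of_forall fun z => tendsto_const_nhds.mul
      (tendsto_differenceQuotientPairing hw hC hlim hRm hR2 hV hpd z))
  · exact hkernel.aestronglyMeasurable.mul
      (stronglyMeasurable_differenceQuotientPairing (hw k) hRm (hV k) _).aestronglyMeasurable
  · exact (hkernel.abs.mul (by fun_prop)).integrable_of_hasCompactSupport
      ((hasCompactSupport_pd_mollifier 0 i).comp_left abs_zero).mul_right
  · rw [norm_mul]
    exact mul_le_mul_of_nonneg_left (abs_differenceQuotientPairing_le (hB k) _ z) (norm_nonneg _)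

end Commutator

/-! ### Finite-mass flows on the whole space -/

/-- A bounded integrable density `R` on `ℝ³` transported by a velocity field `U` with weak
gradient `D x i j = ∂ⱼUᵢ(x)`, where `U` is the limit of the smooth compactly supported fields `v n`.
This is what remains of a weak solution, extended by zero, once its momentum equation is set
aside. -/
structure FiniteMassFlow (M : ℝ) (R : E3 → ℝ) (U : E3 → Fin 3 → ℝ)
    (D : E3 → Fin 3 → Fin 3 → ℝ) (v : ℕ → E3 → Fin 3 → ℝ) : Prop where
  measurable_density : Measurable R
  density_nonneg : ∀ x, 0 ≤ R x
  density_le : ∀ x, R x ≤ M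
  integrable_density : Integrable R
  contDiff_approx : ∀ n, ContDiff ℝ ∞ (v n)
  hasCompactSupport_approx : ∀ n, HasCompactSupport (v n)
  approx_tendsto : ∀ i, LpTendsto 6 volume (fun n x => v n x i) (fun x => U x i)
  tgrad_approx_tendsto :
    ∀ i j, LpTendsto 2 volume (fun n x => tgrad (v n) x i j) (fun x => D x i j)
  approx_tendsto_ae : ∀ᵐ x, Tendsto (fun n => v n x) atTop (𝓝 (U x))
  mass : ∀ φ : E3 → ℝ, ContDiff ℝ ∞ φ → HasCompactSupport φ →
    ∫ x, R x * (∑ i, U x i * pd φ i x) = 0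

lemma pd_sum_sq {w : E3 → Fin 3 → ℝ} (hw : Differentiable ℝ w) (i : Fin 3) (x : E3) :
    pd (fun y => ∑ l, w y l ^ 2) i x = ∑ l, 2 * w x l * tgrad w x l i := by
  have hcoord (l : Fin 3) : DifferentiableAt ℝ (fun y => w y l) x :=
    differentiableAt_pi.1 (hw x) l
  rw [pd_sum _ fun l _ => (hcoord l).fun_pow 2]
  refine Finset.sum_congr rfl fun l _ => ?_
  rw [pd_comp (b := (· ^ 2)) (hasDerivAt_pow 2 (w x l)) (hcoord l), tgrad]
  norm_num

lemma exists_ae_abs_le_of_memLp_top {α : Type*} [MeasurableSpace α] {μ : Measure α} {f : α → ℝ}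
    (hf : MemLp f ⊤ μ) : ∃ C, ∀ᵐ x ∂μ, |f x| ≤ C := by
  refine ⟨(eLpNorm f ⊤ μ).toReal, ?_⟩
  filter_upwards [enorm_ae_le_eLpNormEssSup f μ] with x hx
  rw [← eLpNorm_exponent_top] at hx
  simpa using ENNReal.toReal_mono hf.eLpNorm_ne_top hx

lemma one_le_ofReal_six_fifths : (1 : ℝ≥0∞) ≤ ENNReal.ofReal (6 / 5) :=
  ENNReal.one_le_ofReal.2 (by norm_num)

namespace FiniteMassFlow

variable {M : ℝ} {R : E3 → ℝ} {U : E3 → Fin 3 → ℝ} {D : E3 → Fin 3 → Fin 3 → ℝ}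
  {v : ℕ → E3 → Fin 3 → ℝ}

lemma memLp_density (S : FiniteMassFlow M R U D v) {p : ℝ≥0∞} (hp : 1 ≤ p) : MemLp R p := by
  refine memLp_of_bdd_integrable (M := M) S.integrable_density (Eventually.of_forall fun x => ?_) hp
  rw [abs_of_nonneg (S.density_nonneg x)]
  exact S.density_le x

lemma memLp_velocity (S : FiniteMassFlow M R U D v) (i : Fin 3) : MemLp (fun x => U x i) 6 :=
  (S.approx_tendsto i).memLp_limit

lemma contDiff_approx_apply (S : FiniteMassFlow M R U D v) (n : ℕ) (i : Fin 3) :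
    ContDiff ℝ ∞ fun x => v n x i :=
  contDiff_pi.1 (S.contDiff_approx n) i

lemma differentiable_approx (S : FiniteMassFlow M R U D v) (n : ℕ) : Differentiable ℝ (v n) :=
  (S.contDiff_approx n).differentiable (by simp)

lemma hasCompactSupport_approx_apply (S : FiniteMassFlow M R U D v) (n : ℕ) (i : Fin 3) :
    HasCompactSupport fun x => v n x i :=
  (S.hasCompactSupport_approx n).comp_left (g := fun w : Fin 3 → ℝ => w i) rfl

lemma memLp_momentum_three (S : FiniteMassFlow M R U D v) (i : Fin 3) :
    MemLp (fun x => R x * U x i) 3 :=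
  (S.memLp_velocity i).mul' (S.memLp_density (p := 6) (by norm_num))

lemma memLp_momentum_two (S : FiniteMassFlow M R U D v) (i : Fin 3) :
    MemLp (fun x => R x * U x i) 2 :=
  (S.memLp_velocity i).mul' (S.memLp_density (p := 3) (by norm_num))

lemma integrable_momentum (S : FiniteMassFlow M R U D v) (i : Fin 3) :
    Integrable fun x => R x * U x i :=
  memLp_one_iff_integrable.1
    ((S.memLp_velocity i).mul' (S.memLp_density one_le_ofReal_six_fifths))

/-! ### The convective term -/

lemma integral_convective_approx_eq_zero (S : FiniteMassFlow M R U D v) (n : ℕ) :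
    ∫ x, ∑ i, ∑ j, R x * U x j * v n x i * tgrad (v n) x i j = 0 := by
  have mass_sq := S.mass (fun x => ∑ i, v n x i ^ 2)
    (ContDiff.sum fun i _ => (S.contDiff_approx_apply n i).pow 2)
    ((S.hasCompactSupport_approx n).comp_left (g := fun w : Fin 3 → ℝ => ∑ i, w i ^ 2) (by simp))
  have integrand_eq (x : E3) : R x * (∑ j, U x j * pd (fun x => ∑ i, v n x i ^ 2) j x) =
      2 * ∑ i, ∑ j, R x * U x j * v n x i * tgrad (v n) x i j := by
    simp only [pd_sum_sq (S.differentiable_approx n)]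
    simp only [Fin.sum_univ_three]
    ring
  simpa only [integrand_eq, integral_const_mul, mul_eq_zero, two_ne_zero, false_or] using mass_sq

lemma integral_convective_eq_zero (S : FiniteMassFlow M R U D v) :
    ∫ x, ∑ i, ∑ j, R x * U x i * U x j * D x i j = 0 := by
  have convergence : LpTendsto 1 volume
      (fun n x => ∑ i, ∑ j, R x * U x j * v n x i * tgrad (v n) x i j)
      (fun x => ∑ i, ∑ j, R x * U x j * U x i * D x i j) :=
    .sum le_rfl _ fun i _ => .sum le_rfl _ fun j _ => .mul le_rfl
      (.mul one_le_two (.const (S.memLp_momentum_three j)) (S.approx_tendsto i))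
      (S.tgrad_approx_tendsto i j)
  simpa only [mul_right_comm (R _)] using
    convergence.integral_eq_zero S.integral_convective_approx_eq_zero

/-! ### The force term -/

lemma exists_holderTriple_six_fifths {q : ℝ≥0∞} (hq : ENNReal.ofReal (6 / 5) ≤ q) :
    ∃ r : ℝ≥0∞, 1 ≤ r ∧ ENNReal.HolderTriple r q (ENNReal.ofReal (6 / 5)) := by
  refine ⟨((ENNReal.ofReal (6 / 5))⁻¹ - q⁻¹)⁻¹, ?_, ⟨?_⟩⟩
  · rw [ENNReal.one_le_inv]
    exact tsub_le_self.trans (ENNReal.inv_le_one.2 one_le_ofReal_six_fifths)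
  · rw [inv_inv, tsub_add_cancel_of_le (ENNReal.inv_le_inv.2 hq)]

lemma memLp_density_mul (S : FiniteMassFlow M R U D v) {q : ℝ≥0∞}
    (hq : ENNReal.ofReal (6 / 5) ≤ q) {g : E3 → ℝ} (hg : MemLp g q) :
    MemLp (fun x => R x * g x) (ENNReal.ofReal (6 / 5)) := by
  obtain ⟨r, hr, _⟩ := exists_holderTriple_six_fifths hq
  exact hg.mul' (S.memLp_density hr)

lemma integral_force_eq_zero_of_tendsto (S : FiniteMassFlow M R U D v) {q : ℝ≥0∞}
    (hq : ENNReal.ofReal (6 / 5) ≤ q) {Gn : ℕ → E3 → ℝ} {dG : E3 → Fin 3 → ℝ}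
    (hGn : ∀ n, ContDiff ℝ ∞ (Gn n)) (hGnc : ∀ n, HasCompactSupport (Gn n))
    (hlim : ∀ i, LpTendsto q volume (fun n => pd (Gn n) i) (fun x => dG x i)) :
    ∫ x, ∑ i, R x * dG x i * U x i = 0 := by
  obtain ⟨r, hr, _⟩ := exists_holderTriple_six_fifths hq
  have convergence : LpTendsto 1 volume (fun n x => ∑ i, R x * pd (Gn n) i x * U x i)
      (fun x => ∑ i, R x * dG x i * U x i) :=
    .sum le_rfl _ fun i _ => .mul le_rfl
      (.mul one_le_ofReal_six_fifths (.const (S.memLp_density hr)) (hlim i))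
      (.const (S.memLp_velocity i))
  refine convergence.integral_eq_zero fun n => ?_
  simpa only [Finset.mul_sum, mul_assoc, mul_comm (U _ _)] using S.mass (Gn n) (hGn n) (hGnc n)

lemma integral_momentum_mul_weakGrad_eq_zero (S : FiniteMassFlow M R U D v) {F : E3 → ℝ}
    {dF : E3 → Fin 3 → ℝ} (hF : LocallyIntegrable F) (hFc : HasCompactSupport F)
    (hdF : ∀ i, MemLp (fun x => dF x i) ⊤) (hw : HasWeakGradOn univ F dF) :
    ∫ x, ∑ i, dF x i * (R x * U x i) = 0 := by
  have hdF_loc (i : Fin 3) : LocallyIntegrable fun x => dF x i := (hdF i).locallyIntegrable le_top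
  have convergence : LpTendsto 1 volume
      (fun k x => ∑ i, mollify k (fun y => dF y i) x * (R x * U x i))
      (fun x => ∑ i, dF x i * (R x * U x i)) := by
    refine .sum le_rfl _ fun i _ => ?_
    obtain ⟨C, hC⟩ := exists_ae_abs_le_of_memLp_top (hdF i)
    exact .bdd_mul le_rfl ENNReal.one_ne_top
      (fun k => (contDiff_mollify k (hdF_loc i)).continuous.aestronglyMeasurable)
      (fun k => Eventually.of_forall (abs_mollify_le k hC)) (tendsto_mollify_ae (hdF_loc i))
      (.const (memLp_one_iff_integrable.2 (S.integrable_momentum i)))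
  refine convergence.integral_eq_zero fun k => ?_
  simpa only [pd_mollify_of_hasWeakGradOn k hF hw, Finset.mul_sum, mul_comm (mollify _ _ _),
    mul_assoc] using S.mass (mollify k F) (contDiff_mollify k hF) (hasCompactSupport_mollify k hFc)

end FiniteMassFlow

lemma setIntegral_mul_eq_integral {α : Type*} [MeasurableSpace α] {μ : Measure α} {Ω : Set α}
    {φ : α → ℝ} (hφ : Function.support φ ⊆ Ω) (f : α → ℝ) :
    ∫ x in Ω, f x * φ x ∂μ = ∫ x, f x * φ x ∂μ :=
  setIntegral_eq_integral_of_forall_compl_eq_zero fun x hx => by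
    rw [Function.notMem_support.1 fun h => hx (hφ h), mul_zero]

lemma support_pd_subset (φ : E3 → ℝ) (i : Fin 3) : Function.support (pd φ i) ⊆ tsupport φ :=
  fun _ hx => support_fderiv_subset ℝ fun h => hx (by simp [pd, h])

lemma HasWeakGradOn.mul_isTest {Ω : Set E3} {g P : E3 → ℝ} {dg : E3 → Fin 3 → ℝ}
    (hw : HasWeakGradOn Ω g dg) (hg : LocallyIntegrable g)
    (hdg : ∀ i, LocallyIntegrable fun x => dg x i) (hP : IsTest Ω P) :
    HasWeakGradOn univ (fun x => g x * P x) (fun x i => P x * dg x i + g x * pd P i x) := by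
  rintro φ ⟨hφ, hφc, -⟩ i
  obtain ⟨hPs, hPc, hPΩ⟩ := hP
  have product : IsTest Ω fun x => P x * φ x :=
    ⟨hPs.mul hφ, hPc.mul_right, tsupport_mul_subset_left.trans hPΩ⟩
  have pd_product (x : E3) : pd (fun y => P y * φ y) i x = P x * pd φ i x + φ x * pd P i x :=
    pd_mul (hPs.differentiable (by simp) x) (hφ.differentiable (by simp) x) i
  have weak := hw _ product i
  rw [setIntegral_mul_eq_integral ((support_pd_subset _ i).trans product.2.2),
    setIntegral_mul_eq_integral ((subset_tsupport _).trans product.2.2)] at weak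
  have integrable_mul {f h : E3 → ℝ} (hf : LocallyIntegrable f) (hh : Continuous h)
      (hhc : HasCompactSupport h) : Integrable fun x => f x * h x := by
    simpa only [smul_eq_mul, mul_comm] using
      hf.integrable_smul_left_of_hasCompactSupport hh hhc
  have hφ_pd := continuous_pd (hφ.of_le (by simp)) i
  have integrable_correction : Integrable fun x => g x * (φ x * pd P i x) :=
    integrable_mul hg (hφ.continuous.mul (continuous_pd (hPs.of_le (by simp)) i)) hφc.mul_right
  have split_left : ∫ x, g x * pd (fun y => P y * φ y) i x =
      (∫ x, g x * (P x * pd φ i x)) + ∫ x, g x * (φ x * pd P i x) := by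
    simp only [pd_product, mul_add]
    exact integral_add (integrable_mul hg (hPs.continuous.mul hφ_pd) hPc.mul_right)
      integrable_correction
  have split_right : ∫ x, (P x * dg x i + g x * pd P i x) * φ x =
      (∫ x, dg x i * (P x * φ x)) + ∫ x, g x * (φ x * pd P i x) := by
    rw [← integral_add (integrable_mul (hdg i) product.1.continuous product.2.1)
      integrable_correction]
    exact integral_congr_ae (Eventually.of_forall fun x => by ring)
  simp only [Measure.restrict_univ, mul_assoc]
  linarith

section SoftIndicator

variable {ι : Type*} [Fintype ι] {ε : ℝ}

/-- `|w|² / (ε² + |w|²)`, a smooth approximation of the indicator function of `w ≠ 0`. It truncates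
a bounded potential to the support of the velocity. -/
def softIndicator (ε : ℝ) (w : ι → ℝ) : ℝ := (∑ l, w l ^ 2) / (ε ^ 2 + ∑ l, w l ^ 2)

/-- The gradient of `softIndicator ε` at `w`. -/
def softIndicatorGrad (ε : ℝ) (w : ι → ℝ) (l : ι) : ℝ :=
  2 * ε ^ 2 * w l / (ε ^ 2 + ∑ m, w m ^ 2) ^ 2

lemma add_sum_sq_pos (hε : 0 < ε) (w : ι → ℝ) : 0 < ε ^ 2 + ∑ l, w l ^ 2 := by positivity

lemma sq_le_sum_sq (w : ι → ℝ) (l : ι) : w l ^ 2 ≤ ∑ m, w m ^ 2 :=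
  Finset.single_le_sum (fun _ _ => sq_nonneg _) (Finset.mem_univ l)

lemma softIndicator_zero (ε : ℝ) : softIndicator ε (0 : ι → ℝ) = 0 := by simp [softIndicator]

lemma abs_softIndicator_le (hε : 0 < ε) (w : ι → ℝ) : |softIndicator ε w| ≤ 1 := by
  rw [softIndicator, abs_of_nonneg (by positivity), div_le_one (add_sum_sq_pos hε w)]
  exact le_add_of_nonneg_left (sq_nonneg ε)

lemma abs_softIndicatorGrad_le (hε : 0 < ε) (w : ι → ℝ) (l : ι) :
    |softIndicatorGrad ε w l| ≤ ε⁻¹ := by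
  have den_pos := add_sum_sq_pos hε w
  have sq_le := sq_le_sum_sq w l
  have young : 2 * ε * |w l| ≤ ε ^ 2 + ∑ m, w m ^ 2 := by
    nlinarith [sq_nonneg (ε - |w l|), sq_abs (w l)]
  rw [softIndicatorGrad, abs_div, abs_of_pos (pow_pos den_pos 2), abs_mul,
    abs_of_pos (by positivity : 0 < 2 * ε ^ 2), div_le_iff₀ (pow_pos den_pos 2),
    inv_mul_eq_div, le_div_iff₀ hε]
  calc 2 * ε ^ 2 * |w l| * ε = ε ^ 2 * (2 * ε * |w l|) := by ring
    _ ≤ (ε ^ 2 + ∑ m, w m ^ 2) * (ε ^ 2 + ∑ m, w m ^ 2) := by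
        gcongr
        exact le_add_of_nonneg_right ((sq_nonneg _).trans sq_le)
    _ = (ε ^ 2 + ∑ m, w m ^ 2) ^ 2 := by ring

lemma abs_mul_softIndicatorGrad_le (hε : 0 < ε) (w : ι → ℝ) (i l : ι) :
    |w i * softIndicatorGrad ε w l| ≤ 1 := by
  have den_pos := add_sum_sq_pos hε w
  have cross_le : |w i * w l| ≤ ∑ m, w m ^ 2 :=
    abs_le.2 (by constructor <;>
      nlinarith [sq_nonneg (w i - w l), sq_nonneg (w i + w l), sq_le_sum_sq w i, sq_le_sum_sq w l])
  rw [softIndicatorGrad, mul_div_assoc', abs_div, abs_of_pos (pow_pos den_pos 2),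
    div_le_one (pow_pos den_pos 2)]
  calc |w i * (2 * ε ^ 2 * w l)| = 2 * ε ^ 2 * |w i * w l| := by
        rw [mul_left_comm, abs_mul, abs_of_pos (by positivity : 0 < 2 * ε ^ 2)]
    _ ≤ 2 * ε ^ 2 * ∑ m, w m ^ 2 := by gcongr
    _ ≤ (ε ^ 2 + ∑ m, w m ^ 2) ^ 2 := by nlinarith [sq_nonneg (ε ^ 2), sq_nonneg (∑ m, w m ^ 2)]

lemma contDiff_softIndicator (hε : 0 < ε) : ContDiff ℝ ∞ (softIndicator ε : (ι → ℝ) → ℝ) := by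
  unfold softIndicator
  exact ContDiff.div (by fun_prop) (by fun_prop) fun w => (add_sum_sq_pos hε w).ne'

lemma continuous_softIndicatorGrad (hε : 0 < ε) (l : ι) :
    Continuous fun w : ι → ℝ => softIndicatorGrad ε w l := by
  unfold softIndicatorGrad
  exact Continuous.div (by fun_prop) (by fun_prop) fun w => (pow_pos (add_sum_sq_pos hε w) 2).ne'

lemma pd_softIndicator_comp (hε : 0 < ε) {w : E3 → Fin 3 → ℝ} (hw : Differentiable ℝ w)
    (i : Fin 3) (x : E3) :
    pd (fun y => softIndicator ε (w y)) i x =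
      ∑ l, softIndicatorGrad ε (w x) l * tgrad w x l i := by
  have den_pos := add_sum_sq_pos hε (w x)
  have deriv_ratio : HasDerivAt (fun s => s / (ε ^ 2 + s))
      (ε ^ 2 / (ε ^ 2 + ∑ l, w x l ^ 2) ^ 2) (∑ l, w x l ^ 2) := by
    refine ((hasDerivAt_id' _).div ((hasDerivAt_id' _).const_add (ε ^ 2))
      den_pos.ne').congr_deriv ?_
    ring
  have differentiable_sum_sq : DifferentiableAt ℝ (fun y => ∑ l, w y l ^ 2) x :=
    DifferentiableAt.fun_sum fun l _ => (differentiableAt_pi.1 (hw x) l).fun_pow 2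
  simp only [softIndicator]
  rw [pd_comp deriv_ratio differentiable_sum_sq, pd_sum_sq hw, Finset.mul_sum]
  refine Finset.sum_congr rfl fun l _ => ?_
  rw [softIndicatorGrad]
  ring

lemma tendsto_softIndicator_mul {e : ℕ → ℝ} (he : Tendsto e atTop (𝓝 0)) (w : ι → ℝ) (i : ι) :
    Tendsto (fun k => softIndicator (e k) w * w i) atTop (𝓝 (w i)) := by
  rcases eq_or_ne (w i) 0 with hi | hi
  · simp [hi]
  have sum_pos : 0 < ∑ l, w l ^ 2 := (by positivity : 0 < w i ^ 2).trans_le (sq_le_sum_sq w i)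
  have limit := (tendsto_const_nhds (x := ∑ l, w l ^ 2)).div
    ((he.pow 2).add_const (∑ l, w l ^ 2)) (by simpa using sum_pos.ne')
  simpa [softIndicator, sum_pos.ne'] using limit.mul_const (w i)

lemma tendsto_mul_softIndicatorGrad {e : ℕ → ℝ} (he : Tendsto e atTop (𝓝 0)) (w : ι → ℝ)
    (i l : ι) : Tendsto (fun k => w i * softIndicatorGrad (e k) w l) atTop (𝓝 0) := by
  rcases eq_or_ne (w i) 0 with hi | hi
  · simp [hi]
  have sum_pos : 0 < ∑ l, w l ^ 2 := (by positivity : 0 < w i ^ 2).trans_le (sq_le_sum_sq w i)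
  have limit := (((he.pow 2).const_mul 2).mul_const (w l)).div
    (((he.pow 2).add_const (∑ l, w l ^ 2)).pow 2) (by simpa using sum_pos.ne')
  simpa [softIndicatorGrad] using limit.const_mul (w i)

end SoftIndicator

namespace FiniteMassFlow

variable {M : ℝ} {R : E3 → ℝ} {U : E3 → Fin 3 → ℝ} {D : E3 → Fin 3 → Fin 3 → ℝ}
  {v : ℕ → E3 → Fin 3 → ℝ} {Ω : Set E3} {g : E3 → ℝ} {dg : E3 → Fin 3 → ℝ} {ε : ℝ}

lemma aemeasurable_velocity (S : FiniteMassFlow M R U D v) : AEMeasurable U :=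
  aemeasurable_pi_iff.2 fun i => (S.memLp_velocity i).1.aemeasurable

lemma isTest_softIndicator_approx (S : FiniteMassFlow M R U D v)
    (hv : ∀ n, tsupport (v n) ⊆ Ω) (hε : 0 < ε) (n : ℕ) :
    IsTest Ω fun x => softIndicator ε (v n x) :=
  ⟨(contDiff_softIndicator hε).comp (S.contDiff_approx n),
    (S.hasCompactSupport_approx n).comp_left (softIndicator_zero ε),
    (tsupport_comp_subset (softIndicator_zero ε) (v n)).trans (hv n)⟩

lemma integral_truncated_force_approx_eq_zero (S : FiniteMassFlow M R U D v)
    (hv : ∀ n, tsupport (v n) ⊆ Ω) (hg : MemLp g ⊤) (hdg : ∀ i, MemLp (fun x => dg x i) ⊤)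
    (hw : HasWeakGradOn Ω g dg) (hε : 0 < ε) (n : ℕ) :
    ∫ x, ∑ i, (softIndicator ε (v n x) * (dg x i * (R x * U x i)) +
      ∑ l, g x * (R x * U x i) * (softIndicatorGrad ε (v n x) l * tgrad (v n) x l i)) = 0 := by
  have test := S.isTest_softIndicator_approx hv hε n
  have hg_loc := hg.locallyIntegrable le_top
  have hdg_loc (i : Fin 3) := (hdg i).locallyIntegrable le_top
  have memLp_top_test : MemLp (fun x => softIndicator ε (v n x)) ⊤ :=
    test.1.continuous.memLp_of_hasCompactSupport test.2.1
  have memLp_top_pd (i : Fin 3) : MemLp (pd (fun x => softIndicator ε (v n x)) i) ⊤ :=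
    (continuous_pd (test.1.of_le (by simp)) i).memLp_of_hasCompactSupport
      (hasCompactSupport_pd test.2.1 i)
  have vanish := S.integral_momentum_mul_weakGrad_eq_zero
    ((memLp_top_test.mul' (r := ⊤) hg).locallyIntegrable le_top) test.2.1.mul_left
    (fun i => ((hdg i).mul' memLp_top_test).add ((memLp_top_pd i).mul' hg))
    (hw.mul_isTest hg_loc hdg_loc test)
  rw [← vanish]
  refine integral_congr_ae (Eventually.of_forall fun x => Finset.sum_congr rfl fun i _ => ?_)
  rw [Pi.add_apply, pd_softIndicator_comp hε (S.differentiable_approx n), ← Finset.mul_sum]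
  ring

lemma integral_truncated_force_eq_zero (S : FiniteMassFlow M R U D v)
    (hv : ∀ n, tsupport (v n) ⊆ Ω) (hg : MemLp g ⊤) (hdg : ∀ i, MemLp (fun x => dg x i) ⊤)
    (hw : HasWeakGradOn Ω g dg) (hε : 0 < ε) :
    ∫ x, ∑ i, (softIndicator ε (U x) * (dg x i * (R x * U x i)) +
      ∑ l, g x * (R x * U x i) * (softIndicatorGrad ε (U x) l * D x l i)) = 0 := by
  have continuous_ind := (contDiff_softIndicator (ι := Fin 3) hε).continuous
  have continuous_grad (l : Fin 3) := continuous_softIndicatorGrad hε l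
  refine LpTendsto.integral_eq_zero (.sum le_rfl _ fun i _ => .add le_rfl ?_
    (.sum le_rfl _ fun l _ => .mul (p := 2) (q := 2) le_rfl ?_ ?_))
    (S.integral_truncated_force_approx_eq_zero hv hg hdg hw hε)
  · refine .bdd_mul le_rfl ENNReal.one_ne_top
      (fun n => (continuous_ind.comp (S.contDiff_approx n).continuous).aestronglyMeasurable)
      (fun n => Eventually.of_forall fun x => abs_softIndicator_le hε _)
      (S.approx_tendsto_ae.mono fun x hx => (continuous_ind.tendsto _).comp hx) (.const ?_)
    exact (memLp_one_iff_integrable.2 (S.integrable_momentum i)).mul' (hdg i)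
  · exact .const ((S.memLp_momentum_two i).mul' hg)
  · exact .bdd_mul one_le_two ENNReal.ofNat_ne_top
      (fun n => ((continuous_grad l).comp (S.contDiff_approx n).continuous).aestronglyMeasurable)
      (fun n => Eventually.of_forall fun x => abs_softIndicatorGrad_le hε _ l)
      (S.approx_tendsto_ae.mono fun x hx => ((continuous_grad l).tendsto _).comp hx)
      (S.tgrad_approx_tendsto l i)

lemma integral_force_eq_zero_of_memLp_top (S : FiniteMassFlow M R U D v)
    (hv : ∀ n, tsupport (v n) ⊆ Ω) (hg : MemLp g ⊤) (hdg : ∀ i, MemLp (fun x => dg x i) ⊤)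
    (hw : HasWeakGradOn Ω g dg) :
    ∫ x, ∑ i, R x * dg x i * U x i = 0 := by
  obtain ⟨e, -, e_pos, e_tendsto⟩ := exists_seq_strictAnti_tendsto (0 : ℝ)
  have measurable_comp {h : (Fin 3 → ℝ) → ℝ} (hh : Continuous h) :
      AEStronglyMeasurable fun x => h (U x) :=
    (hh.measurable.comp_aemeasurable S.aemeasurable_velocity).aestronglyMeasurable
  have momentum_term (i : Fin 3) : LpTendsto 1 volume
      (fun k x => softIndicator (e k) (U x) * (dg x i * (R x * U x i)))
      (fun x => R x * dg x i * U x i) := by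
    have force_memLp : MemLp (fun x => dg x i * (R x * U x i)) 1 :=
      (memLp_one_iff_integrable.2 (S.integrable_momentum i)).mul' (hdg i)
    refine .of_dominated ENNReal.one_ne_top
      (fun k => (measurable_comp (contDiff_softIndicator (e_pos k)).continuous).mul force_memLp.1)
      force_memLp.abs (fun k => Eventually.of_forall fun x => ?_)
      (Eventually.of_forall fun x => ?_)
    · rw [abs_mul]
      exact mul_le_of_le_one_left (abs_nonneg _) (abs_softIndicator_le (e_pos k) _)
    · exact ((tendsto_softIndicator_mul e_tendsto (U x) i).const_mul (R x * dg x i)).congr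
        fun k => by ring
  have gradient_term (i l : Fin 3) : LpTendsto 1 volume
      (fun k x => U x i * softIndicatorGrad (e k) (U x) l * (R x * g x * D x l i))
      (fun x => 0 * (R x * g x * D x l i)) :=
    .bdd_mul le_rfl ENNReal.one_ne_top
      (fun k => measurable_comp
        ((continuous_apply i).mul (continuous_softIndicatorGrad (e_pos k) l)))
      (fun k => Eventually.of_forall fun x => abs_mul_softIndicatorGrad_le (e_pos k) _ i l)
      (Eventually.of_forall fun x => tendsto_mul_softIndicatorGrad e_tendsto (U x) i l)
      (.const ((S.tgrad_approx_tendsto l i).memLp_limit.mul' (p := 2)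
        (hg.mul' (S.memLp_density one_le_two))))
  have vanish := (LpTendsto.sum le_rfl Finset.univ fun i _ => (momentum_term i).add le_rfl
    (.sum le_rfl Finset.univ fun l _ => gradient_term i l)).integral_eq_zero fun k => by
      rw [← S.integral_truncated_force_eq_zero hv hg hdg hw (e_pos k)]
      refine integral_congr_ae (Eventually.of_forall fun x => Finset.sum_congr rfl fun i _ => ?_)
      exact congrArg _ (Finset.sum_congr rfl fun l _ => by ring)
  simpa using vanish

end FiniteMassFlow

/-! ### Renormalization of the continuity equation -/

lemma integral_kernel_mul_commutator_eq {G : Type*} [AddGroup G] [MeasurableSpace G]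
    [MeasurableAdd₂ G] [MeasurableNeg G] {μ : Measure G} [SFinite μ] [μ.IsAddRightInvariant]
    {κ W R V : G → ℝ} {B C : ℝ} (hκ : Integrable κ μ) (hW : AEStronglyMeasurable W μ)
    (hC : ∀ x, |W x| ≤ C) (hR : Integrable R μ) (hV : AEStronglyMeasurable V μ)
    (hB : ∀ x, |V x| ≤ B) :
    ∫ y, κ y * ∫ x, W x * (R (x - y) * (V x - V (x - y))) ∂μ ∂μ =
      (∫ x, W x * V x * ∫ y, κ y * R (x - y) ∂μ ∂μ) -
        ∫ x, W x * ∫ y, κ y * (R (x - y) * V (x - y)) ∂μ ∂μ := by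
  have hRV : Integrable (fun x => R x * V x) μ := hR.mul_bdd hV (Eventually.of_forall hB)
  have hWV : AEStronglyMeasurable (fun x => W x * V x) μ := hW.mul hV
  have hWV_le (x : G) : |W x * V x| ≤ C * B := by
    rw [abs_mul]
    exact mul_le_mul (hC x) (hB x) (abs_nonneg _) ((abs_nonneg _).trans (hC x))
  rw [integral_mul_convolution_eq hκ hWV hWV_le hR, integral_mul_convolution_eq hκ hW hC hRV,
    ← integral_sub (integrable_kernel_mul_integral_translate hκ hWV hWV_le hR)
      (integrable_kernel_mul_integral_translate hκ hW hC hRV)]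
  refine integral_congr_ae (Eventually.of_forall fun y => ?_)
  dsimp only
  rw [← mul_sub, ← integral_sub
    ((hR.comp_sub_right y).bdd_mul hWV (Eventually.of_forall hWV_le))
    ((hRV.comp_sub_right y).bdd_mul hW (Eventually.of_forall hC))]
  exact congrArg _ (integral_congr_ae (Eventually.of_forall fun x => by ring))

lemma integral_renormalized_mollify_mul_pd_eq {R V : E3 → ℝ} {g h : ℝ → ℝ}
    (hR : LocallyIntegrable R) (hg : ∀ s, HasDerivAt g (h s) s) (hh : Continuous h)
    (hV : ContDiff ℝ 1 V) (hVc : HasCompactSupport V) (k : ℕ) (i : Fin 3) :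
    ∫ x, g (mollify k R x) * mollify k R x * pd V i x =
      -∫ x, (g (mollify k R x) + mollify k R x * h (mollify k R x)) * V x *
        ∫ y, pd (mollifier k) i y * R (x - y) := by
  have smooth := contDiff_mollify k hR
  have hasDerivAt_renormalization (s : ℝ) : HasDerivAt (fun s => g s * s) (g s + s * h s) s :=
    ((hg s).mul (hasDerivAt_id' s)).congr_deriv (by ring)
  have contDiff_renormalization : ContDiff ℝ 1 fun s => g s * s := by
    refine contDiff_one_iff_deriv.2 ⟨fun s => (hasDerivAt_renormalization s).differentiableAt, ?_⟩
    rw [funext fun s => (hasDerivAt_renormalization s).deriv]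
    have continuous_g : Continuous g := continuous_iff_continuousAt.2 fun s => (hg s).continuousAt
    fun_prop
  rw [integral_mul_pd_eq_neg (f := fun x => g (mollify k R x) * mollify k R x)
    (contDiff_renormalization.comp (smooth.of_le (by simp))) hV hVc]
  refine congrArg Neg.neg (integral_congr_ae (Eventually.of_forall fun x => ?_))
  dsimp only
  rw [pd_comp (b := fun s => g s * s) (hasDerivAt_renormalization _)
    (smooth.differentiable (by simp) x), pd_mollify k hR, mul_right_comm]

namespace FiniteMassFlow

variable {M : ℝ} {R : E3 → ℝ} {U : E3 → Fin 3 → ℝ} {D : E3 → Fin 3 → Fin 3 → ℝ}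
  {v : ℕ → E3 → Fin 3 → ℝ} {g h : ℝ → ℝ}

lemma continuous_tgrad_approx (S : FiniteMassFlow M R U D v) (n : ℕ) (i j : Fin 3) :
    Continuous fun x => tgrad (v n) x i j :=
  continuous_pd ((S.contDiff_approx_apply n i).of_le (by simp)) j

lemma hasCompactSupport_tgrad_approx (S : FiniteMassFlow M R U D v) (n : ℕ) (i j : Fin 3) :
    HasCompactSupport fun x => tgrad (v n) x i j :=
  hasCompactSupport_pd (S.hasCompactSupport_approx_apply n i) j

lemma sum_integral_pd_mollifier_mul_momentum_eq_zero (S : FiniteMassFlow M R U D v) (k : ℕ)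
    (x : E3) : ∑ i, ∫ y, pd (mollifier k) i y * (R (x - y) * U (x - y) i) = 0 := by
  have integrable_term (i : Fin 3) :
      Integrable fun y => R y * U y i * pd (mollifier k) i (x - y) := by
    obtain ⟨B, hB⟩ := exists_abs_pd_mollifier_le k i
    exact (S.integrable_momentum i).mul_bdd (c := B)
      ((continuous_pd_mollifier k i).comp (by fun_prop)).aestronglyMeasurable
      (Eventually.of_forall fun y => hB _)
  have mass := S.mass _ (isTest_mollifier_sub k x).1 (isTest_mollifier_sub k x).2.1
  simp only [pd_mollifier_sub, mul_neg, Finset.sum_neg_distrib, integral_neg, neg_eq_zero,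
    Finset.mul_sum, ← mul_assoc] at mass
  simp only [fun i => integral_mul_comp_sub_eq (pd (mollifier k) i) (fun y => R y * U y i) x]
  rw [← integral_finsetSum _ fun i _ => integrable_term i, mass]

lemma momentum_approx_tendsto (S : FiniteMassFlow M R U D v) (i : Fin 3) :
    LpTendsto 1 volume (fun n x => R x * v n x i) (fun x => R x * U x i) :=
  .mul le_rfl (.const (S.memLp_density one_le_ofReal_six_fifths)) (S.approx_tendsto i)

lemma integrable_momentum_error (S : FiniteMassFlow M R U D v) (n : ℕ) (i : Fin 3) :
    Integrable fun x => R x * v n x i - R x * U x i :=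
  memLp_one_iff_integrable.1
    (((S.momentum_approx_tendsto i).memLp n).sub (S.momentum_approx_tendsto i).memLp_limit)

lemma sum_integral_mul_momentum_error_eq (S : FiniteMassFlow M R U D v) {w : E3 → ℝ} {C : ℝ}
    (hw : Continuous w) (hC : ∀ x, |w x| ≤ C) (k n : ℕ) :
    ∑ i, ∫ x, w x * ∫ y, pd (mollifier k) i y *
        (R (x - y) * v n (x - y) i - R (x - y) * U (x - y) i) =
      ∑ i, ∫ x, w x * ∫ y, pd (mollifier k) i y * (R (x - y) * v n (x - y) i) := by
  have approx_integrable (i : Fin 3) : Integrable fun x => R x * v n x i :=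
    memLp_one_iff_integrable.1 ((S.momentum_approx_tendsto i).memLp n)
  have kernel_integrable {a : E3 → ℝ} (ha : Integrable a) (i : Fin 3) (x : E3) :
      Integrable fun y => pd (mollifier k) i y * a (x - y) := by
    obtain ⟨B, hB⟩ := exists_abs_pd_mollifier_le k i
    exact (ha.comp_sub_left x).bdd_mul (integrable_pd_mollifier k i).1 (Eventually.of_forall hB)
  have sum_inner_eq (x : E3) :
      ∑ i, ∫ y, pd (mollifier k) i y * (R (x - y) * v n (x - y) i - R (x - y) * U (x - y) i) =
        ∑ i, ∫ y, pd (mollifier k) i y * (R (x - y) * v n (x - y) i) := by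
    simp only [mul_sub, fun i => integral_sub (kernel_integrable (approx_integrable i) i x)
      (kernel_integrable (S.integrable_momentum i) i x), Finset.sum_sub_distrib,
      S.sum_integral_pd_mollifier_mul_momentum_eq_zero, sub_zero]
  rw [← integral_finsetSum _ fun i _ => integrable_mul_convolution (integrable_pd_mollifier k i)
      hw.aestronglyMeasurable hC (S.integrable_momentum_error n i),
    ← integral_finsetSum _ fun i _ => integrable_mul_convolution (integrable_pd_mollifier k i)
      hw.aestronglyMeasurable hC (approx_integrable i)]
  simp only [← Finset.mul_sum, sum_inner_eq]

lemma integral_renormalized_mollify_mul_div_eq (S : FiniteMassFlow M R U D v)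
    (hg : ∀ s, HasDerivAt g (h s) s) (hh : Continuous h) (k n : ℕ) {C : ℝ}
    (hC : ∀ x, |g (mollify k R x) + mollify k R x * h (mollify k R x)| ≤ C) :
    -∫ x, g (mollify k R x) * mollify k R x * ∑ i, tgrad (v n) x i i =
      (∑ i, ∫ x, (g (mollify k R x) + mollify k R x * h (mollify k R x)) *
        ∫ y, pd (mollifier k) i y * (R (x - y) * v n (x - y) i - R (x - y) * U (x - y) i)) +
      ∑ i, ∫ y, pd (mollifier k) i y *
        ∫ x, (g (mollify k R x) + mollify k R x * h (mollify k R x)) *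
          (R (x - y) * (v n x i - v n (x - y) i)) := by
  have locallyIntegrable_density := S.integrable_density.locallyIntegrable
  have continuous_mollify := (contDiff_mollify k locallyIntegrable_density).continuous
  have continuous_g : Continuous g := continuous_iff_continuousAt.2 fun s => (hg s).continuousAt
  have continuous_weight : Continuous fun x =>
      g (mollify k R x) + mollify k R x * h (mollify k R x) := by fun_prop
  have bounded_approx (i : Fin 3) : ∃ B, ∀ x, |v n x i| ≤ B :=
    (S.contDiff_approx_apply n i).continuous.bounded_above_of_compact_support
      (S.hasCompactSupport_approx_apply n i)
  choose B hB using bounded_approx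
  have commutator_eq (i : Fin 3) := integral_kernel_mul_commutator_eq
    (integrable_pd_mollifier k i) continuous_weight.aestronglyMeasurable hC S.integrable_density
    (S.contDiff_approx_apply n i).continuous.aestronglyMeasurable (hB i)
  have by_parts (i : Fin 3) := integral_renormalized_mollify_mul_pd_eq
    locallyIntegrable_density hg hh ((S.contDiff_approx_apply n i).of_le (by simp))
    (S.hasCompactSupport_approx_apply n i) k i
  have continuous_renormalized : Continuous fun x => g (mollify k R x) * mollify k R x := by
    fun_prop
  have integrable_div (i : Fin 3) :
      Integrable fun x => g (mollify k R x) * mollify k R x * tgrad (v n) x i i :=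
    Continuous.integrable_of_hasCompactSupport
      (continuous_renormalized.mul (S.continuous_tgrad_approx n i i))
      (S.hasCompactSupport_tgrad_approx n i i).mul_left
  rw [S.sum_integral_mul_momentum_error_eq continuous_weight hC]
  simp only [commutator_eq, Finset.sum_sub_distrib, Finset.mul_sum, add_sub_cancel]
  rw [integral_finsetSum _ fun i _ => integrable_div i, ← Finset.sum_neg_distrib]
  exact Finset.sum_congr rfl fun i _ => by rw [← neg_eq_iff_eq_neg.2 (by_parts i)]; rfl

lemma exists_momentum_error_le (S : FiniteMassFlow M R U D v) {w : E3 → ℝ} {C : ℝ}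
    (hw : Continuous w) (hC : ∀ x, |w x| ≤ C) (k : ℕ) {δ : ℝ} (hδ : 0 < δ) :
    ∃ n, k ≤ n ∧ |∑ i, ∫ x, w x * ∫ y, pd (mollifier k) i y *
      (R (x - y) * v n (x - y) i - R (x - y) * U (x - y) i)| ≤ δ := by
  have bound_tendsto : Tendsto (fun n => ∑ i, (∫ y, |pd (mollifier k) i y|) *
      (C * ∫ x, |R x * v n x i - R x * U x i|)) atTop (𝓝 0) := by
    simpa using tendsto_finsetSum Finset.univ fun i _ =>
      ((S.momentum_approx_tendsto i).tendsto_integral_abs_sub.const_mul C).const_mul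
        (∫ y, |pd (mollifier k) i y|)
  obtain ⟨n, bound_lt, hkn⟩ :=
    ((bound_tendsto.eventually (gt_mem_nhds hδ)).and (eventually_ge_atTop k)).exists
  refine ⟨n, hkn, (Finset.abs_sum_le_sum_abs _ _).trans
    ((Finset.sum_le_sum fun i _ => ?_).trans bound_lt.le)⟩
  exact abs_integral_mul_convolution_le (integrable_pd_mollifier k i) hw.aestronglyMeasurable hC
    (S.integrable_momentum_error n i)

lemma mollify_density_mem_Icc (S : FiniteMassFlow M R U D v) (k : ℕ) (x : E3) :
    mollify k R x ∈ Icc 0 M := by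
  refine ⟨mollify_nonneg k S.density_nonneg x, (le_abs_self _).trans
    (abs_mollify_le k (Eventually.of_forall fun y => ?_) x)⟩
  rw [abs_of_nonneg (S.density_nonneg y)]
  exact S.density_le y

lemma integrable_comp_density_mul (S : FiniteMassFlow M R U D v) {f : ℝ → ℝ} (hf : Continuous f)
    (i : Fin 3) : Integrable fun x => f (R x) * (R x * D x i i) := by
  obtain ⟨C, hC⟩ := isCompact_Icc.exists_bound_of_continuousOn (s := Icc 0 M) hf.continuousOn
  have integrable_density_mul : Integrable fun x => R x * D x i i := memLp_one_iff_integrable.1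
    ((S.tgrad_approx_tendsto i i).memLp_limit.mul' (p := 2) (S.memLp_density one_le_two))
  exact integrable_density_mul.bdd_mul
    (hf.measurable.comp S.measurable_density).aestronglyMeasurable
    (Eventually.of_forall fun x => hC _ ⟨S.density_nonneg x, S.density_le x⟩)

lemma integrable_comp_density_mul_div (S : FiniteMassFlow M R U D v) {f : ℝ → ℝ}
    (hf : Continuous f) : Integrable fun x => f (R x) * (R x * ∑ i, D x i i) := by
  simp only [Finset.mul_sum]
  exact integrable_finsetSum _ fun i _ => S.integrable_comp_density_mul hf i

lemma integral_comp_density_mul_div (S : FiniteMassFlow M R U D v) {f : ℝ → ℝ}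
    (hf : Continuous f) :
    ∫ x, f (R x) * (R x * ∑ i, D x i i) = ∑ i, ∫ x, f (R x) * (R x * D x i i) := by
  simp only [Finset.mul_sum]
  exact integral_finsetSum _ fun i _ => S.integrable_comp_density_mul hf i

lemma exists_abs_comp_mollify_density_le (S : FiniteMassFlow M R U D v) {f : ℝ → ℝ}
    (hf : Continuous f) : ∃ C, ∀ k x, |f (mollify k R x)| ≤ C := by
  obtain ⟨C, hC⟩ := isCompact_Icc.exists_bound_of_continuousOn (s := Icc 0 M) hf.continuousOn
  exact ⟨C, fun k x => hC _ (S.mollify_density_mem_Icc k x)⟩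

lemma continuous_comp_mollify_density (S : FiniteMassFlow M R U D v) {f : ℝ → ℝ}
    (hf : Continuous f) (k : ℕ) : Continuous fun x => f (mollify k R x) :=
  hf.comp (contDiff_mollify k S.integrable_density.locallyIntegrable).continuous

lemma tendsto_comp_mollify_density_ae (S : FiniteMassFlow M R U D v) {f : ℝ → ℝ}
    (hf : Continuous f) : ∀ᵐ x, Tendsto (fun k => f (mollify k R x)) atTop (𝓝 (f (R x))) := by
  filter_upwards [tendsto_mollify_ae S.integrable_density.locallyIntegrable] with x hx
  exact (hf.tendsto _).comp hx

lemma tendsto_integral_comp_mollify_mul_div (S : FiniteMassFlow M R U D v) {f : ℝ → ℝ}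
    (hf : Continuous f) {ns : ℕ → ℕ} (hns : Tendsto ns atTop atTop) :
    Tendsto (fun k => ∫ x, f (mollify k R x) * mollify k R x * ∑ i, tgrad (v (ns k)) x i i) atTop
      (𝓝 (∫ x, f (R x) * (R x * ∑ i, D x i i))) := by
  obtain ⟨C, hC⟩ := S.exists_abs_comp_mollify_density_le hf
  refine tendsto_integral_mul_mollify_mul (S.continuous_comp_mollify_density hf) hC
    (S.tendsto_comp_mollify_density_ae hf) S.measurable_density S.integrable_density
    (S.memLp_density one_le_two)
    (fun k => continuous_finsetSum _ fun i _ => S.continuous_tgrad_approx (ns k) i i)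
    (fun k => ?_)
    ((LpTendsto.sum one_le_two Finset.univ fun i _ => S.tgrad_approx_tendsto i i).comp_tendsto hns)
  simp only [Fin.sum_univ_three]
  exact ((S.hasCompactSupport_tgrad_approx _ 0 0).add (S.hasCompactSupport_tgrad_approx _ 1 1)).add
    (S.hasCompactSupport_tgrad_approx _ 2 2)

lemma tendsto_sum_integral_pd_mollifier_mul_commutator (S : FiniteMassFlow M R U D v) {f : ℝ → ℝ}
    (hf : Continuous f) {ns : ℕ → ℕ} (hns : Tendsto ns atTop atTop) :
    Tendsto (fun k => ∑ i, ∫ y, pd (mollifier k) i y *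
        ∫ x, f (mollify k R x) * (R (x - y) * (v (ns k) x i - v (ns k) (x - y) i))) atTop
      (𝓝 (-∫ x, f (R x) * (R x * ∑ i, D x i i))) := by
  obtain ⟨C, hC⟩ := S.exists_abs_comp_mollify_density_le hf
  rw [S.integral_comp_density_mul_div hf, ← Finset.sum_neg_distrib]
  exact tendsto_finsetSum _ fun i _ =>
    tendsto_integral_pd_mollifier_mul_commutator (S.continuous_comp_mollify_density hf) hC
      (S.tendsto_comp_mollify_density_ae hf) S.measurable_density S.integrable_density
      (S.memLp_density one_le_two) (V := fun k x => v (ns k) x i)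
      (fun k => (S.contDiff_approx_apply (ns k) i).of_le (by simp))
      (fun k => S.hasCompactSupport_approx_apply (ns k) i)
      (fun j => (S.tgrad_approx_tendsto i j).comp_tendsto hns) i

lemma integral_renormalized_div_eq (S : FiniteMassFlow M R U D v)
    (hg : ∀ s, HasDerivAt g (h s) s) (hh : Continuous h) :
    ∫ x, g (R x) * (R x * ∑ i, D x i i) =
      ∫ x, (g (R x) + R x * h (R x)) * (R x * ∑ i, D x i i) := by
  have continuous_g : Continuous g := continuous_iff_continuousAt.2 fun s => (hg s).continuousAt
  have continuous_weight : Continuous fun s => g s + s * h s := by fun_prop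
  obtain ⟨C, hC⟩ := S.exists_abs_comp_mollify_density_le continuous_weight
  choose ns hns error_le using fun k => S.exists_momentum_error_le
    (S.continuous_comp_mollify_density continuous_weight k) (hC k) k (mollifierScale_pos k)
  have ns_tendsto : Tendsto ns atTop atTop := tendsto_atTop_mono hns tendsto_id
  have right_tendsto := (squeeze_zero_norm error_le tendsto_mollifierScale).add
    (S.tendsto_sum_integral_pd_mollifier_mul_commutator continuous_weight ns_tendsto)
  have left_tendsto := (S.tendsto_integral_comp_mollify_mul_div continuous_g ns_tendsto).neg
  simp only [← S.integral_renormalized_mollify_mul_div_eq hg hh _ _ (hC _), zero_add]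
    at right_tendsto
  exact neg_injective (tendsto_nhds_unique left_tendsto right_tendsto)

lemma integral_density_mul_comp_density_mul_div_eq_zero (S : FiniteMassFlow M R U D v)
    (hh : Continuous h) : ∫ x, R x * h (R x) * (R x * ∑ i, D x i i) = 0 := by
  have hasDerivAt_primitive (s : ℝ) : HasDerivAt (fun s => ∫ t in (0 : ℝ)..s, h t) (h s) s :=
    hh.integral_hasStrictDerivAt 0 s |>.hasDerivAt
  have continuous_primitive : Continuous fun s => ∫ t in (0 : ℝ)..s, h t :=
    continuous_iff_continuousAt.2 fun s => (hasDerivAt_primitive s).continuousAt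
  have continuous_id_mul : Continuous fun s => s * h s := by fun_prop
  have renormalized := S.integral_renormalized_div_eq hasDerivAt_primitive hh
  simp only [add_mul] at renormalized
  rw [integral_add (S.integrable_comp_density_mul_div continuous_primitive)
    (S.integrable_comp_density_mul_div continuous_id_mul)] at renormalized
  exact left_eq_add.1 renormalized

end FiniteMassFlow

/-! ### The pressure term -/

lemma exists_abs_le_mul_sqrt {p : ℝ → ℝ} (hp : ContinuousOn p (Ici 0))
    (hp_sqrt : ∃ C, ∀ s, 0 ≤ s → s < 1 → |p s| ≤ C * √s) (M : ℝ) :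
    ∃ C, ∀ s ∈ Icc 0 M, |p s| ≤ C * √s := by
  obtain ⟨C, hC⟩ := hp_sqrt
  obtain ⟨B, hB⟩ := isCompact_Icc.exists_bound_of_continuousOn (s := Icc 0 M)
    (hp.mono Icc_subset_Ici_self)
  refine ⟨max C B, fun s hs => ?_⟩
  rcases lt_or_ge s 1 with hs1 | hs1
  · exact (hC s hs.1 hs1).trans
      (mul_le_mul_of_nonneg_right (le_max_left _ _) (Real.sqrt_nonneg _))
  · have le_max : |p s| ≤ max C B := (hB s hs).trans (le_max_right _ _)
    exact le_max.trans
      (le_mul_of_one_le_right ((abs_nonneg _).trans le_max) (Real.one_le_sqrt.2 hs1))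

lemma tendsto_div_add_nhds_one {ι : Type*} {l : Filter ι} {ε : ι → ℝ} {a : ℝ} (ha : a ≠ 0)
    (hε : Tendsto ε l (𝓝 0)) : Tendsto (fun n => a / (a + ε n)) l (𝓝 1) := by
  have quotient := (tendsto_const_nhds (x := a)).div (hε.const_add a) (by rwa [add_zero])
  rwa [add_zero, div_self ha] at quotient

namespace FiniteMassFlow

variable {M : ℝ} {R : E3 → ℝ} {U : E3 → Fin 3 → ℝ} {D : E3 → Fin 3 → Fin 3 → ℝ}
  {v : ℕ → E3 → Fin 3 → ℝ} {p : ℝ → ℝ}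

lemma measurable_pressure (S : FiniteMassFlow M R U D v) (hp : ContinuousOn p (Ici 0)) :
    Measurable fun x => p (R x) := by
  have continuous_comp_abs : Continuous fun s => p |s| :=
    hp.comp_continuous continuous_abs abs_nonneg
  simpa only [Function.comp_def, abs_of_nonneg (S.density_nonneg _)] using
    continuous_comp_abs.measurable.comp S.measurable_density

lemma memLp_pressure (S : FiniteMassFlow M R U D v) (hp : ContinuousOn p (Ici 0))
    (hp_sqrt : ∃ C, ∀ s, 0 ≤ s → s < 1 → |p s| ≤ C * √s) : MemLp (fun x => p (R x)) 2 := by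
  obtain ⟨C, hC⟩ := exists_abs_le_mul_sqrt hp hp_sqrt M
  have measurable_pressure := S.measurable_pressure hp
  rw [memLp_two_iff_integrable_sq measurable_pressure.aestronglyMeasurable]
  refine (S.integrable_density.const_mul (C ^ 2)).mono'
    (measurable_pressure.pow_const 2).aestronglyMeasurable (Eventually.of_forall fun x => ?_)
  calc ‖p (R x) ^ 2‖ = |p (R x)| ^ 2 := by rw [Real.norm_eq_abs, abs_pow]
    _ ≤ (C * √(R x)) ^ 2 := by gcongr; exact hC _ ⟨S.density_nonneg x, S.density_le x⟩
    _ = C ^ 2 * R x := by rw [mul_pow, Real.sq_sqrt (S.density_nonneg x)]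

lemma memLp_div (S : FiniteMassFlow M R U D v) : MemLp (fun x => ∑ i, D x i i) 2 :=
  memLp_finsetSum _ fun i _ => (S.tgrad_approx_tendsto i i).memLp_limit

lemma integral_truncated_pressure_mul_div_eq_zero (S : FiniteMassFlow M R U D v)
    (hp : ContinuousOn p (Ici 0)) {ε : ℝ} (hε : 0 < ε) :
    ∫ x, R x ^ 2 / (R x ^ 2 + ε) * (p (R x) * ∑ i, D x i i) = 0 := by
  have continuous_weight : Continuous fun s => p |s| / (s ^ 2 + ε) :=
    (hp.comp_continuous continuous_abs abs_nonneg).div (by fun_prop) fun s => by positivity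
  rw [← S.integral_density_mul_comp_density_mul_div_eq_zero continuous_weight]
  refine integral_congr_ae (Eventually.of_forall fun x => ?_)
  dsimp only
  rw [abs_of_nonneg (S.density_nonneg x)]
  ring

lemma integral_pressure_mul_div_eq_zero (S : FiniteMassFlow M R U D v)
    (hp : ContinuousOn p (Ici 0)) (hp0 : p 0 = 0) (hP : MemLp (fun x => p (R x)) 2) :
    ∫ x, p (R x) * ∑ i, D x i i = 0 := by
  obtain ⟨ε, -, ε_pos, ε_tendsto⟩ := exists_seq_strictAnti_tendsto (0 : ℝ)
  have weight_mem_Icc (n : ℕ) (x : E3) : R x ^ 2 / (R x ^ 2 + ε n) ∈ Icc (0 : ℝ) 1 := by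
    have := ε_pos n
    exact ⟨by positivity, div_le_one_of_le₀ (by linarith) (by positivity)⟩
  have integrable_limit : Integrable fun x => p (R x) * ∑ i, D x i i :=
    memLp_one_iff_integrable.1 (S.memLp_div.mul' hP)
  have limit := tendsto_integral_of_dominated_convergence
    (F := fun n x => R x ^ 2 / (R x ^ 2 + ε n) * (p (R x) * ∑ i, D x i i))
    (f := fun x => p (R x) * ∑ i, D x i i) (fun x => ‖p (R x) * ∑ i, D x i i‖)
    (fun n => ((S.measurable_density.pow_const 2).div
      ((S.measurable_density.pow_const 2).add_const _)).aestronglyMeasurable.mul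
        integrable_limit.1)
    integrable_limit.norm
    (fun n => Eventually.of_forall fun x => by
      rw [norm_mul, Real.norm_of_nonneg (weight_mem_Icc n x).1]
      exact mul_le_of_le_one_left (norm_nonneg _) (weight_mem_Icc n x).2)
    (Eventually.of_forall fun x => ?_)
  · simpa only [fun n => S.integral_truncated_pressure_mul_div_eq_zero hp (ε_pos n),
      tendsto_const_nhds_iff, eq_comm] using limit
  · rcases eq_or_ne (R x) 0 with hx | hx
    · simp [hx, hp0]
    · simpa only [one_mul] using
        (tendsto_div_add_nhds_one (pow_ne_zero 2 hx) ε_tendsto).mul_const (p (R x) * ∑ i, D x i i)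

end FiniteMassFlow

/-! ### The viscous term -/

lemma integral_tgrad_mul_tgrad_swap {V : E3 → Fin 3 → ℝ} (hV : ContDiff ℝ 2 V)
    (hVc : HasCompactSupport V) (i j : Fin 3) :
    ∫ x, tgrad V x i j * tgrad V x j i = ∫ x, tgrad V x i i * tgrad V x j j :=
  integral_pd_mul_pd_swap (contDiff_pi.1 hV i) ((contDiff_pi.1 hV j).of_le one_le_two)
    (hVc.comp_left (g := fun w : Fin 3 → ℝ => w j) rfl) j i

lemma sum_mul_transpose_le_sum_sq {ι : Type*} [Fintype ι] (A : ι → ι → ℝ) :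
    ∑ i, ∑ j, A i j * A j i ≤ ∑ i, ∑ j, A i j ^ 2 := by
  have swap : ∑ i, ∑ j, A j i ^ 2 = ∑ i, ∑ j, A i j ^ 2 := Finset.sum_comm
  have sum_sq_sub_nonneg : 0 ≤ ∑ i, ∑ j, (A i j - A j i) ^ 2 := by positivity
  simp only [sub_sq, Finset.sum_add_distrib, Finset.sum_sub_distrib, mul_assoc,
    ← Finset.mul_sum, swap] at sum_sq_sub_nonneg
  linarith

-- The term with coefficient `c` is a null Lagrangian: it integrates to zero on gradients.
lemma exists_coercive_add_nullLagrangian_le_smat (μ η : ℝ) :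
    ∃ c, ∀ A : Fin 3 → Fin 3 → ℝ,
      min μ (4 / 3 * μ + η) * ∑ i, ∑ j, A i j ^ 2 +
          c * ∑ i, ∑ j, (A i j * A j i - A i i * A j j) ≤
        ∑ i, ∑ j, Smat μ η A i j * A i j := by
  have smat_eq (A : Fin 3 → Fin 3 → ℝ) : ∑ i, ∑ j, Smat μ η A i j * A i j =
      μ * ∑ i, ∑ j, A i j ^ 2 + (1 / 3 * μ + η) * (∑ i, A i i) ^ 2 +
        μ * ∑ i, ∑ j, (A i j * A j i - A i i * A j j) := by
    simp only [Smat, Fin.sum_univ_three, Fin.isValue, Fin.reduceEq, zero_ne_one, one_ne_zero,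
      ↓reduceIte]
    ring
  have null_eq (A : Fin 3 → Fin 3 → ℝ) : ∑ i, ∑ j, (A i j * A j i - A i i * A j j) =
      ∑ i, ∑ j, A i j * A j i - (∑ i, A i i) ^ 2 := by
    simp only [Finset.sum_sub_distrib, sq, Finset.sum_mul_sum]
  rcases le_or_gt 0 (1 / 3 * μ + η) with hκ | hκ
  · refine ⟨μ, fun A => ?_⟩
    rw [smat_eq, min_eq_left (by linarith)]
    nlinarith [mul_nonneg hκ (sq_nonneg (∑ i, A i i))]
  · refine ⟨μ - (1 / 3 * μ + η), fun A => ?_⟩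
    rw [smat_eq, min_eq_right (by linarith), null_eq]
    nlinarith [mul_le_mul_of_nonpos_left (sum_mul_transpose_le_sum_sq A) hκ.le]

lemma eLpNorm_le_sum_eLpNorm_pd {f : E3 → ℝ} (hf : ContDiff ℝ 1 f) (hfc : HasCompactSupport f) :
    eLpNorm f 6 volume ≤ SNormLESNormFDerivOfEqConst ℝ (volume : Measure E3) 2 *
      ∑ j, eLpNorm (pd f j) 2 volume := by
  have norm_fderiv_le (x : E3) : ‖fderiv ℝ f x‖ ≤ (∑ j, fun x => |pd f j x|) x := by
    rw [Finset.sum_apply]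
    refine ContinuousLinearMap.opNorm_le_bound _ (by positivity) fun a => ?_
    rw [fderiv_apply_eq_sum_pd, Finset.sum_mul]
    refine (norm_sum_le _ _).trans (Finset.sum_le_sum fun j _ => ?_)
    rw [norm_mul, mul_comm]
    exact mul_le_mul_of_nonneg_left (PiLp.norm_apply_le a j) (abs_nonneg _)
  calc eLpNorm f 6 volume
      ≤ SNormLESNormFDerivOfEqConst ℝ (volume : Measure E3) 2 *
          eLpNorm (fderiv ℝ f) 2 volume :=
        eLpNorm_le_eLpNorm_fderiv_of_eq (p := 2) (p' := 6) volume hf hfc (by norm_num) (by simp)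
          (by norm_num [finrank_euclideanSpace])
    _ ≤ _ * eLpNorm (∑ j, fun x => |pd f j x|) 2 volume := by
        gcongr
        exact eLpNorm_mono_real norm_fderiv_le
    _ ≤ _ * ∑ j, eLpNorm (fun x => |pd f j x|) 2 volume := by
        gcongr
        exact eLpNorm_sum_le (fun j _ => (continuous_pd hf j).abs.aestronglyMeasurable) one_le_two
    _ = _ := by simp only [← Real.norm_eq_abs, eLpNorm_norm]

namespace FiniteMassFlow

variable {M : ℝ} {R : E3 → ℝ} {U : E3 → Fin 3 → ℝ} {D : E3 → Fin 3 → Fin 3 → ℝ}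
  {v : ℕ → E3 → Fin 3 → ℝ} {μ η : ℝ}

lemma memLp_gradient (S : FiniteMassFlow M R U D v) (i j : Fin 3) : MemLp (fun x => D x i j) 2 :=
  (S.tgrad_approx_tendsto i j).memLp_limit

lemma integrable_gradient_mul (S : FiniteMassFlow M R U D v) (i j k l : Fin 3) :
    Integrable fun x => D x i j * D x k l :=
  (S.memLp_gradient i j).integrable_mul (S.memLp_gradient k l)

lemma integral_gradient_mul_gradient_swap (S : FiniteMassFlow M R U D v) (i j : Fin 3) :
    ∫ x, D x i j * D x j i = ∫ x, D x i i * D x j j := by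
  have tendsto_pairing (a b c d : Fin 3) : Tendsto
      (fun n => ∫ x, tgrad (v n) x a b * tgrad (v n) x c d) atTop
      (𝓝 (∫ x, D x a b * D x c d)) :=
    (LpTendsto.mul le_rfl (S.tgrad_approx_tendsto a b)
      (S.tgrad_approx_tendsto c d)).tendsto_integral
  refine tendsto_nhds_unique (tendsto_pairing i j j i) ?_
  have swap_approx (n : ℕ) := integral_tgrad_mul_tgrad_swap
    ((S.contDiff_approx n).of_le (WithTop.coe_le_coe.2 le_top)) (S.hasCompactSupport_approx n) i j
  simpa only [swap_approx] using tendsto_pairing i i j j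

lemma integral_nullLagrangian_eq_zero (S : FiniteMassFlow M R U D v) :
    ∫ x, ∑ i, ∑ j, (D x i j * D x j i - D x i i * D x j j) = 0 := by
  have integrable_term (i j : Fin 3) :
      Integrable fun x => D x i j * D x j i - D x i i * D x j j :=
    (S.integrable_gradient_mul i j j i).sub (S.integrable_gradient_mul i i j j)
  rw [integral_finsetSum _ fun i _ => integrable_finsetSum _ fun j _ => integrable_term i j]
  refine Finset.sum_eq_zero fun i _ => ?_
  rw [integral_finsetSum _ fun j _ => integrable_term i j]
  refine Finset.sum_eq_zero fun j _ => ?_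
  rw [integral_sub (S.integrable_gradient_mul i j j i) (S.integrable_gradient_mul i i j j),
    S.integral_gradient_mul_gradient_swap, sub_self]

lemma memLp_smat (S : FiniteMassFlow M R U D v) (μ η : ℝ) (i j : Fin 3) :
    MemLp (fun x => Smat μ η (D x) i j) 2 :=
  ((((S.memLp_gradient i j).add (S.memLp_gradient j i)).sub
    ((S.memLp_div.const_mul _).mul_const _)).const_mul μ).add
    ((S.memLp_div.const_mul η).mul_const _)

lemma integrable_sum_smat_mul (S : FiniteMassFlow M R U D v) (μ η : ℝ) :
    Integrable fun x => ∑ i, ∑ j, Smat μ η (D x) i j * D x i j :=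
  integrable_finsetSum _ fun i _ => integrable_finsetSum _ fun j _ =>
    (S.memLp_smat μ η i j).integrable_mul (S.memLp_gradient i j)

lemma integrable_sum_gradient_sq (S : FiniteMassFlow M R U D v) :
    Integrable fun x => ∑ i, ∑ j, D x i j ^ 2 :=
  integrable_finsetSum _ fun i _ => integrable_finsetSum _ fun j _ =>
    (S.memLp_gradient i j).integrable_sq

lemma integral_sum_gradient_sq_le (S : FiniteMassFlow M R U D v) (μ η : ℝ) :
    min μ (4 / 3 * μ + η) * ∫ x, ∑ i, ∑ j, D x i j ^ 2 ≤
      ∫ x, ∑ i, ∑ j, Smat μ η (D x) i j * D x i j := by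
  obtain ⟨c, coercive⟩ := exists_coercive_add_nullLagrangian_le_smat μ η
  have integrable_null : Integrable fun x =>
      ∑ i, ∑ j, (D x i j * D x j i - D x i i * D x j j) :=
    integrable_finsetSum _ fun i _ => integrable_finsetSum _ fun j _ =>
      (S.integrable_gradient_mul i j j i).sub (S.integrable_gradient_mul i i j j)
  have integral_le := integral_mono
    ((S.integrable_sum_gradient_sq.const_mul _).add (integrable_null.const_mul c))
    (S.integrable_sum_smat_mul μ η) fun x => coercive (D x)
  simpa only [integral_add (S.integrable_sum_gradient_sq.const_mul _) (integrable_null.const_mul c),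
    Pi.add_apply, integral_const_mul, S.integral_nullLagrangian_eq_zero, mul_zero, add_zero]
    using integral_le

lemma gradient_ae_eq_zero (S : FiniteMassFlow M R U D v) (hμ : 0 < μ) (hη : 0 < 4 / 3 * μ + η)
    (hS : ∫ x, ∑ i, ∑ j, Smat μ η (D x) i j * D x i j = 0) :
    ∀ᵐ x, ∀ i j, D x i j = 0 := by
  have energy_nonneg (x : E3) : 0 ≤ ∑ i, ∑ j, D x i j ^ 2 := by positivity
  have energy_le : ∫ x, ∑ i, ∑ j, D x i j ^ 2 ≤ 0 := by
    have coercive := S.integral_sum_gradient_sq_le μ η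
    rw [hS] at coercive
    exact nonpos_of_mul_nonpos_right coercive (lt_min hμ hη)
  have energy_ae_eq_zero := (integral_eq_zero_iff_of_nonneg energy_nonneg
    S.integrable_sum_gradient_sq).1 (energy_le.antisymm (integral_nonneg energy_nonneg))
  filter_upwards [energy_ae_eq_zero] with x hx i j
  have row_eq_zero := (Finset.sum_eq_zero_iff_of_nonneg fun i _ => by positivity).1 hx i
    (Finset.mem_univ i)
  exact pow_eq_zero_iff two_ne_zero |>.1
    ((Finset.sum_eq_zero_iff_of_nonneg fun j _ => by positivity).1 row_eq_zero j
      (Finset.mem_univ j))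

lemma velocity_ae_eq_zero (S : FiniteMassFlow M R U D v) (hD : ∀ᵐ x, ∀ i j, D x i j = 0) :
    ∀ᵐ x, U x = 0 := by
  have tgrad_tendsto (i j : Fin 3) :
      Tendsto (fun n => eLpNorm (pd (fun y => v n y i) j) 2 volume) atTop (𝓝 0) := by
    refine (S.tgrad_approx_tendsto i j).tendsto_eLpNorm_sub.congr fun n => eLpNorm_congr_ae ?_
    filter_upwards [hD] with x hx
    rw [hx, sub_zero, tgrad]
  have approx_tendsto_zero (i : Fin 3) : LpTendsto 6 volume (fun n x => v n x i) 0 := by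
    have bound_tendsto := ENNReal.Tendsto.const_mul
      (tendsto_finsetSum Finset.univ fun j _ => tgrad_tendsto i j)
      (Or.inr (ENNReal.coe_ne_top (r := SNormLESNormFDerivOfEqConst ℝ (volume : Measure E3) 2)))
    refine .of_eLpNorm_sub_le (S.approx_tendsto i).memLp .zero (fun n => ?_)
      (by simpa only [Finset.sum_const_zero, mul_zero] using bound_tendsto)
    simpa only [Pi.zero_apply, sub_zero] using eLpNorm_le_sum_eLpNorm_pd
      ((S.contDiff_approx_apply n i).of_le (by simp)) (S.hasCompactSupport_approx_apply n i)
  have velocity_apply_ae_eq_zero (i : Fin 3) : ∀ᵐ x, U x i = 0 := by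
    obtain ⟨ns, hns, subseq_tendsto⟩ :=
      (approx_tendsto_zero i).exists_subseq_tendsto_ae (by norm_num)
    filter_upwards [S.approx_tendsto_ae, subseq_tendsto] with x hx hx_zero
    exact tendsto_nhds_unique ((tendsto_pi_nhds.1 hx i).comp hns.tendsto_atTop) hx_zero
  exact (ae_all_iff.2 velocity_apply_ae_eq_zero).mono fun x hx => funext hx

end FiniteMassFlow

/-! ### The energy identity -/

lemma FiniteMassFlow.integral_smat_mul_gradient_eq_zero {M μ η : ℝ} {R P : E3 → ℝ}
    {U f : E3 → Fin 3 → ℝ} {D : E3 → Fin 3 → Fin 3 → ℝ} {v : ℕ → E3 → Fin 3 → ℝ}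
    (S : FiniteMassFlow M R U D v) (hP : MemLp P 2) (hP0 : ∫ x, P x * ∑ i, D x i i = 0)
    (hf : ∀ i, MemLp (fun x => f x i) (ENNReal.ofReal (6 / 5)))
    (hf0 : ∫ x, ∑ i, f x i * U x i = 0)
    (momentum : ∀ n, ∫ x, ((∑ i, ∑ j, R x * U x i * U x j * tgrad (v n) x i j)
        + P x * ∑ i, tgrad (v n) x i i)
      = (∫ x, ∑ i, ∑ j, Smat μ η (D x) i j * tgrad (v n) x i j) - ∫ x, ∑ i, f x i * v n x i) :
    ∫ x, ∑ i, ∑ j, Smat μ η (D x) i j * D x i j = 0 := by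
  have convection : LpTendsto 1 volume
      (fun n x => ∑ i, ∑ j, R x * U x i * U x j * tgrad (v n) x i j)
      (fun x => ∑ i, ∑ j, R x * U x i * U x j * D x i j) :=
    .sum le_rfl _ fun i _ => .sum le_rfl _ fun j _ => .mul le_rfl
      (.const (p := 2) ((S.memLp_velocity j).mul' (S.memLp_momentum_three i)))
      (S.tgrad_approx_tendsto i j)
  have pressure : LpTendsto 1 volume (fun n x => P x * ∑ i, tgrad (v n) x i i)
      (fun x => P x * ∑ i, D x i i) :=
    .mul le_rfl (.const hP) (.sum one_le_two _ fun i _ => S.tgrad_approx_tendsto i i)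
  have viscosity : LpTendsto 1 volume
      (fun n x => ∑ i, ∑ j, Smat μ η (D x) i j * tgrad (v n) x i j)
      (fun x => ∑ i, ∑ j, Smat μ η (D x) i j * D x i j) :=
    .sum le_rfl _ fun i _ => .sum le_rfl _ fun j _ =>
      .mul le_rfl (.const (S.memLp_smat μ η i j)) (S.tgrad_approx_tendsto i j)
  have force : LpTendsto 1 volume (fun n x => ∑ i, f x i * v n x i)
      (fun x => ∑ i, f x i * U x i) :=
    .sum le_rfl _ fun i _ => .mul le_rfl (.const (hf i)) (S.approx_tendsto i)
  have energy := tendsto_nhds_unique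
    ((convection.add le_rfl pressure).tendsto_integral.congr momentum)
    (viscosity.tendsto_integral.sub force.tendsto_integral)
  rw [integral_add (memLp_one_iff_integrable.1 convection.memLp_limit)
    (memLp_one_iff_integrable.1 pressure.memLp_limit), S.integral_convective_eq_zero, hP0,
    hf0] at energy
  linarith

/-! ### Extension by zero -/

lemma LpTendsto.indicator_of_restrict {α E : Type*} [MeasurableSpace α] [NormedAddCommGroup E]
    [NormedSpace ℝ E] {μ : Measure α} {p : ℝ≥0∞} {Ω : Set α} (hΩ : MeasurableSet Ω)
    {f : ℕ → α → E} {g : α → E} (hf : ∀ n, MemLp (f n) p μ)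
    (hfΩ : ∀ n, Function.support (f n) ⊆ Ω) (hg : AEStronglyMeasurable g (μ.restrict Ω))
    (hlim : Tendsto (fun n => eLpNorm (fun x => f n x - g x) p (μ.restrict Ω)) atTop (𝓝 0))
    (L : E →L[ℝ] ℝ) :
    LpTendsto p μ (fun n x => L (f n x)) (fun x => L (Ω.indicator g x)) := by
  have eLpNorm_sub_indicator (n : ℕ) : eLpNorm (fun x => f n x - Ω.indicator g x) p μ =
      eLpNorm (fun x => f n x - g x) p (μ.restrict Ω) := by
    rw [← eLpNorm_indicator_eq_eLpNorm_restrict hΩ]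
    refine congrArg (eLpNorm · p μ) (funext fun x => ?_)
    by_cases hx : x ∈ Ω
    · simp only [indicator_of_mem hx]
    · simp only [indicator_of_notMem hx, Function.notMem_support.1 fun h => hx (hfΩ n h), sub_zero]
  simp only [← eLpNorm_sub_indicator] at hlim
  have measurable_sub (n : ℕ) : AEStronglyMeasurable (fun x => f n x - Ω.indicator g x) μ :=
    (hf n).1.sub ((aestronglyMeasurable_indicator_iff hΩ).2 hg)
  have memLp_indicator : MemLp (Ω.indicator g) p μ := by
    obtain ⟨n, hn⟩ := (hlim.eventually_lt_const ENNReal.zero_lt_top).exists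
    simpa [Pi.sub_def] using (hf n).sub ⟨measurable_sub n, hn⟩
  have bound_tendsto := ENNReal.Tendsto.const_mul (a := ENNReal.ofReal ‖L‖) hlim
    (Or.inr ENNReal.ofReal_ne_top)
  rw [mul_zero] at bound_tendsto
  refine .of_eLpNorm_sub_le (fun n => L.comp_memLp' (hf n)) (L.comp_memLp' memLp_indicator)
    (fun n => ?_) bound_tendsto
  refine eLpNorm_le_mul_eLpNorm_of_ae_le_mul (Eventually.of_forall fun x => ?_) p
  rw [← map_sub]
  exact L.le_opNorm _

lemma setIntegral_eq_integral_of_ae_eq {α : Type*} [MeasurableSpace α] {μ : Measure α}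
    {Ω : Set α} {F F' : α → ℝ} (hF : ∀ᵐ x ∂(μ.restrict Ω), F x = F' x)
    (hF' : ∀ x, x ∉ Ω → F' x = 0) : ∫ x in Ω, F x ∂μ = ∫ x, F' x ∂μ := by
  rw [integral_congr_ae hF, setIntegral_eq_integral_of_forall_compl_eq_zero hF']

lemma exists_bounded_extension {α : Type*} [MeasurableSpace α] {μ : Measure α} {Ω : Set α}
    (hΩ : MeasurableSet Ω) {ρ : α → ℝ} (hρ : MemLp ρ ⊤ (μ.restrict Ω))
    (hρ0 : ∀ᵐ x ∂(μ.restrict Ω), 0 ≤ ρ x) :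
    ∃ (M : ℝ) (R : α → ℝ), Measurable R ∧ (∀ x, R x ∈ Icc 0 M) ∧
      (∀ᵐ x ∂(μ.restrict Ω), ρ x = R x) ∧ Function.support R ⊆ Ω := by
  obtain ⟨C, hC⟩ := exists_ae_abs_le_of_memLp_top hρ
  have hρm := hρ.1.aemeasurable
  let M := max 0 C
  refine ⟨M, Ω.indicator fun x => max 0 (min M (hρm.mk ρ x)),
    (measurable_const.max (measurable_const.min hρm.measurable_mk)).indicator hΩ, fun x => ?_, ?_,
    support_indicator_subset⟩
  · refine ⟨indicator_nonneg (fun _ _ => le_max_left _ _) x, ?_⟩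
    exact indicator_le' (fun _ _ => max_le (le_max_left _ _) (min_le_left _ _))
      (fun _ _ => le_max_left _ _) x
  · filter_upwards [hC, hρ0, hρm.ae_eq_mk, ae_restrict_mem hΩ] with x hxC hx0 hx_mk hxΩ
    rw [indicator_of_mem hxΩ, ← hx_mk,
      min_eq_right ((le_abs_self _).trans (hxC.trans (le_max_right _ _))), max_eq_right hx0]

lemma support_grad_subset (φ : E3 → ℝ) :
    Function.support (fun x i => pd φ i x) ⊆ tsupport φ := fun x hx => by
  obtain ⟨i, hi⟩ := Function.ne_iff.1 hx
  exact support_pd_subset φ i hi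

lemma support_tgrad_subset (V : E3 → Fin 3 → ℝ) : Function.support (tgrad V) ⊆ tsupport V :=
  fun x hx => by
    obtain ⟨i, hi⟩ := Function.ne_iff.1 hx
    exact tsupport_comp_subset (g := fun w : Fin 3 → ℝ => w i) rfl V (support_grad_subset _ hi)

lemma IsTest.memLp_grad {Ω : Set E3} {φ : E3 → ℝ} (hφ : IsTest Ω φ) (p : ℝ≥0∞) :
    MemLp (fun x i => pd φ i x) p :=
  (continuous_pi fun i => continuous_pd (hφ.1.of_le (by simp)) i).memLp_of_hasCompactSupport
    (hφ.2.1.mono' (support_grad_subset φ))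

lemma IsTestVec.memLp {Ω : Set E3} {V : E3 → Fin 3 → ℝ} (hV : IsTestVec ∞ Ω V) (p : ℝ≥0∞) :
    MemLp V p :=
  hV.1.continuous.memLp_of_hasCompactSupport hV.2.1

lemma IsTestVec.memLp_tgrad {Ω : Set E3} {V : E3 → Fin 3 → ℝ} (hV : IsTestVec ∞ Ω V)
    (p : ℝ≥0∞) : MemLp (tgrad V) p :=
  (continuous_pi fun i => continuous_pi fun j =>
    continuous_pd ((contDiff_pi.1 hV.1 i).of_le (by simp)) j).memLp_of_hasCompactSupport
    (hV.2.1.mono' (support_tgrad_subset V))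

lemma MemD012.exists_approx {Ω : Set E3} (hΩ : MeasurableSet Ω) {u : E3 → Fin 3 → ℝ}
    {du : E3 → Fin 3 → Fin 3 → ℝ} (h : MemD012 Ω u du) :
    ∃ v : ℕ → E3 → Fin 3 → ℝ, (∀ n, IsTestVec ∞ Ω (v n)) ∧
      (∀ i, LpTendsto 6 volume (fun n x => v n x i) (fun x => Ω.indicator u x i)) ∧
      (∀ i j, LpTendsto 2 volume (fun n x => tgrad (v n) x i j)
        (fun x => Ω.indicator du x i j)) ∧
      ∀ᵐ x, Tendsto (fun n => v n x) atTop (𝓝 (Ω.indicator u x)) := by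
  obtain ⟨hu, -, hdu, w, hw, hDw, hUw⟩ := h
  have hum : AEStronglyMeasurable u (volume.restrict Ω) := hu.aestronglyMeasurable
  have support_subset (n : ℕ) : Function.support (w n) ⊆ Ω :=
    (subset_tsupport _).trans (hw n).2.2
  obtain ⟨ns, hns, hae⟩ := (tendstoInMeasure_of_tendsto_eLpNorm (by norm_num)
    (fun n => ((hw n).memLp 6).1.restrict) hum hUw).exists_seq_tendsto_ae
  refine ⟨fun n => w (ns n), fun n => hw _, fun i => ?_, fun i j => ?_, ?_⟩
  · exact (LpTendsto.indicator_of_restrict hΩ (fun n => (hw n).memLp 6) support_subset hum hUw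
      (.proj i)).comp_tendsto hns.tendsto_atTop
  · exact (LpTendsto.indicator_of_restrict hΩ (fun n => (hw n).memLp_tgrad 2)
      (fun n => (support_tgrad_subset _).trans (hw n).2.2) hdu.1 hDw
      ((ContinuousLinearMap.proj j : (Fin 3 → ℝ) →L[ℝ] ℝ).comp (.proj i))).comp_tendsto
        hns.tendsto_atTop
  · filter_upwards [(ae_restrict_iff' hΩ).1 hae] with x hx
    by_cases hxΩ : x ∈ Ω
    · simpa only [indicator_of_mem hxΩ] using hx hxΩ
    · have approx_eq_zero (n : ℕ) : w n x = 0 :=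
        Function.notMem_support.1 fun h => hxΩ (support_subset n h)
      simp only [approx_eq_zero, indicator_of_notMem hxΩ, tendsto_const_nhds_iff]

namespace WeakSolution

variable {Ω : Set E3} {μ η : ℝ} {p : ℝ → ℝ} {G : E3 → ℝ} {dG : E3 → Fin 3 → ℝ} {ρ : E3 → ℝ}
  {u : E3 → Fin 3 → ℝ} {du : E3 → Fin 3 → Fin 3 → ℝ}

lemma exists_finiteMassFlow (hsol : WeakSolution Ω μ η p G dG ρ u du) (hΩ : MeasurableSet Ω)
    (hρ1 : MemLp ρ 1 (volume.restrict Ω)) (hρ_top : MemLp ρ ⊤ (volume.restrict Ω)) :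
    ∃ (M : ℝ) (R : E3 → ℝ) (v : ℕ → E3 → Fin 3 → ℝ),
      FiniteMassFlow M R (Ω.indicator u) (Ω.indicator du) v ∧
      (∀ᵐ x ∂(volume.restrict Ω), ρ x = R x) ∧ ∀ n, IsTestVec ∞ Ω (v n) := by
  obtain ⟨M, R, hRm, hR, hρR, hRΩ⟩ := exists_bounded_extension hΩ hρ_top hsol.ρ_nonneg
  obtain ⟨v, hv, hvU, hvD, hv_ae⟩ := hsol.u_D012.exists_approx hΩ
  refine ⟨M, R, v, ⟨hRm, fun x => (hR x).1, fun x => (hR x).2, ?_, fun n => (hv n).1,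
    fun n => (hv n).2.1, hvU, hvD, hv_ae, fun φ hφ hφc => ?_⟩, hρR, hv⟩
  · exact (integrableOn_iff_integrable_of_support_subset hRΩ).1
      ((memLp_one_iff_integrable.1 hρ1).congr hρR)
  · rw [← hsol.mass φ hφ hφc]
    refine (setIntegral_eq_integral_of_ae_eq ?_ fun x hx => ?_).symm
    · filter_upwards [hρR, ae_restrict_mem hΩ] with x hxR hxΩ
      simp only [hxR, indicator_of_mem hxΩ]
    · rw [Function.notMem_support.1 fun h => hx (hRΩ h), zero_mul]

lemma momentum_extension (hsol : WeakSolution Ω μ η p G dG ρ u du) (hΩ : MeasurableSet Ω)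
    {R : E3 → ℝ} (hρR : ∀ᵐ x ∂(volume.restrict Ω), ρ x = R x) {φ : E3 → Fin 3 → ℝ}
    (hφ : IsTestVec 1 Ω φ) :
    ∫ x, ((∑ i, ∑ j, R x * Ω.indicator u x i * Ω.indicator u x j * tgrad φ x i j)
        + p (R x) * ∑ i, tgrad φ x i i)
      = (∫ x, ∑ i, ∑ j, Smat μ η (Ω.indicator du x) i j * tgrad φ x i j)
        - ∫ x, ∑ i, R x * Ω.indicator dG x i * φ x i := by
  have tgrad_eq_zero (x : E3) (hx : x ∉ Ω) : tgrad φ x = 0 :=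
    Function.notMem_support.1 fun h => hx (hφ.2.2 (support_tgrad_subset φ h))
  have φ_eq_zero (x : E3) (hx : x ∉ Ω) : φ x = 0 :=
    image_eq_zero_of_notMem_tsupport fun h => hx (hφ.2.2 h)
  convert hsol.momentum φ hφ using 1
  · refine (setIntegral_eq_integral_of_ae_eq ?_ fun x hx => by simp [tgrad_eq_zero x hx]).symm
    filter_upwards [hρR, ae_restrict_mem hΩ] with x hxR hxΩ
    simp only [hxR, indicator_of_mem hxΩ]
  · refine congrArg₂ (· - ·)
      (setIntegral_eq_integral_of_ae_eq ?_ fun x hx => by simp [tgrad_eq_zero x hx]).symm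
      (setIntegral_eq_integral_of_ae_eq ?_ fun x hx => by simp [φ_eq_zero x hx]).symm
    · filter_upwards [ae_restrict_mem hΩ] with x hxΩ
      simp only [indicator_of_mem hxΩ]
    · filter_upwards [hρR, ae_restrict_mem hΩ] with x hxR hxΩ
      simp only [hxR, indicator_of_mem hxΩ]

end WeakSolution

lemma HasWeakGradOn.indicator {Ω : Set E3} (hΩ : MeasurableSet Ω) {G : E3 → ℝ}
    {dG : E3 → Fin 3 → ℝ} (h : HasWeakGradOn Ω G dG) :
    HasWeakGradOn Ω (Ω.indicator G) (Ω.indicator dG) := fun φ hφ i => by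
  rw [setIntegral_congr_fun hΩ fun x hx => by rw [indicator_of_mem hx], h φ hφ i]
  exact congrArg _ (setIntegral_congr_fun hΩ fun x hx => by simp only [indicator_of_mem hx])

namespace FiniteMassFlow

variable {M : ℝ} {R : E3 → ℝ} {U : E3 → Fin 3 → ℝ} {D : E3 → Fin 3 → Fin 3 → ℝ}
  {v : ℕ → E3 → Fin 3 → ℝ} {Ω : Set E3} {G : E3 → ℝ} {dG : E3 → Fin 3 → ℝ}

lemma memLp_and_integral_force_eq_zero_of_memD01q (S : FiniteMassFlow M R U D v)
    (hΩ : MeasurableSet Ω) {q : ℝ} (hq : 6 / 5 ≤ q) (hG : MemD01q Ω G dG q) :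
    (∀ i, MemLp (fun x => R x * Ω.indicator dG x i) (ENNReal.ofReal (6 / 5))) ∧
      ∫ x, ∑ i, R x * Ω.indicator dG x i * U x i = 0 := by
  obtain ⟨-, hdG, Gn, hGn, hlim, -⟩ := hG
  have hq' := ENNReal.ofReal_le_ofReal hq
  have grad_tendsto (i : Fin 3) := LpTendsto.indicator_of_restrict hΩ
    (fun n => (hGn n).memLp_grad _) (fun n => (support_grad_subset _).trans (hGn n).2.2) hdG.1 hlim
    (.proj i)
  exact ⟨fun i => S.memLp_density_mul hq' (grad_tendsto i).memLp_limit,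
    S.integral_force_eq_zero_of_tendsto hq' (fun n => (hGn n).1) (fun n => (hGn n).2.1)
      grad_tendsto⟩

lemma memLp_and_integral_force_eq_zero_of_memW1inf (S : FiniteMassFlow M R U D v)
    (hΩ : MeasurableSet Ω) (hv : ∀ n, tsupport (v n) ⊆ Ω) (hG : MemW1inf Ω G dG) :
    (∀ i, MemLp (fun x => R x * Ω.indicator dG x i) (ENNReal.ofReal (6 / 5))) ∧
      ∫ x, ∑ i, R x * Ω.indicator dG x i * U x i = 0 := by
  obtain ⟨hw, hG_top, hdG_top⟩ := hG
  have memLp_indicator (i : Fin 3) : MemLp (fun x => Ω.indicator dG x i) ⊤ :=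
    ((memLp_indicator_iff_restrict hΩ).2 hdG_top).eval i
  exact ⟨fun i => S.memLp_density_mul le_top (memLp_indicator i),
    S.integral_force_eq_zero_of_memLp_top hv ((memLp_indicator_iff_restrict hΩ).2 hG_top)
      memLp_indicator (hw.indicator hΩ)⟩

end FiniteMassFlow

theorem liouville_finite_mass_general
    {Ω : Set E3} (hΩ : IsOpen Ω) {μ η : ℝ} (hμ : 0 < μ) (hη : 0 < 4 / 3 * μ + η)
    {p : ℝ → ℝ} {G : E3 → ℝ} {dG : E3 → Fin 3 → ℝ}
    {ρ : E3 → ℝ} {u : E3 → Fin 3 → ℝ} {du : E3 → Fin 3 → Fin 3 → ℝ}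
    (hp_cont : ContinuousOn p (Ici 0))
    (hp_sqrt : ∃ C, ∀ s, 0 ≤ s → s < 1 → |p s| ≤ C * √s)
    (hG : (∃ q : ℝ, 6 / 5 ≤ q ∧ MemD01q Ω G dG q) ∨ MemW1inf Ω G dG)
    (hsol : WeakSolution Ω μ η p G dG ρ u du)
    (hρ1 : MemLp ρ 1 (volume.restrict Ω)) (hρ_top : MemLp ρ ⊤ (volume.restrict Ω)) :
    ∀ᵐ x ∂(volume.restrict Ω), u x = 0 := by
  have hΩm := hΩ.measurableSet
  obtain ⟨M, R, v, S, hρR, hv⟩ := hsol.exists_finiteMassFlow hΩm hρ1 hρ_top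
  obtain ⟨memLp_force, force_eq_zero⟩ :
      (∀ i, MemLp (fun x => R x * Ω.indicator dG x i) (ENNReal.ofReal (6 / 5))) ∧
        ∫ x, ∑ i, R x * Ω.indicator dG x i * Ω.indicator u x i = 0 := by
    rcases hG with ⟨q, hq, hG⟩ | hG
    · exact S.memLp_and_integral_force_eq_zero_of_memD01q hΩm hq hG
    · exact S.memLp_and_integral_force_eq_zero_of_memW1inf hΩm (fun n => (hv n).2.2) hG
  have hp0 : p 0 = 0 := by
    obtain ⟨C, hC⟩ := hp_sqrt
    simpa using hC 0 le_rfl one_pos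
  have memLp_pressure := S.memLp_pressure hp_cont hp_sqrt
  have dissipation_eq_zero := S.integral_smat_mul_gradient_eq_zero (μ := μ) (η := η)
    memLp_pressure (S.integral_pressure_mul_div_eq_zero hp_cont hp0 memLp_pressure) memLp_force
    force_eq_zero fun n => hsol.momentum_extension hΩm hρR ⟨(hv n).1.of_le (by simp), (hv n).2⟩
  have gradient_eq_zero := S.gradient_ae_eq_zero hμ hη dissipation_eq_zero
  filter_upwards [ae_restrict_of_ae (S.velocity_ae_eq_zero gradient_eq_zero),
    ae_restrict_mem hΩm] with x hx hxΩ
  rwa [indicator_of_mem hxΩ] at hx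

/-- **Theorem 1.** If the total mass of a weak solution is finite (`ρ ∈ L¹ ∩ L^∞(Ω)`), the
pressure satisfies `p(0) = 0`, `p ≥ 0`, `p(s) ≲ √s` for `s < 1`, and the potential `G` belongs
either to `D₀^{1,q}(Ω)` for some `6/5 ≤ q < ∞` or to `W^{1,∞}(Ω)`, then `u = 0` a.e. in `Ω`. -/
theorem liouville_finite_mass
    (Ω : Set E3) (hΩ_open : IsOpen Ω) (hΩ_conn : IsConnected Ω)
    (μ η : ℝ) (hμ : 0 < μ) (hη : 0 ≤ η)
    (p : ℝ → ℝ) (G : E3 → ℝ) (dG : E3 → Fin 3 → ℝ)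
    (ρ : E3 → ℝ) (u : E3 → Fin 3 → ℝ) (du : E3 → Fin 3 → Fin 3 → ℝ)
    (hp_cont : ContinuousOn p (Ici 0)) (hp0 : p 0 = 0)
    (hp_nonneg : ∀ s, 0 ≤ s → 0 ≤ p s)
    (hp_sqrt : ∃ C > 0, ∀ s, 0 ≤ s → s < 1 → p s ≤ C * Real.sqrt s)
    (hG : (∃ q : ℝ, 6 / 5 ≤ q ∧ MemD01q Ω G dG q) ∨ MemW1inf Ω G dG)
    (hsol : WeakSolution Ω μ η p G dG ρ u du)
    (hρ1 : MemLp ρ 1 (volume.restrict Ω)) (hρ_top : MemLp ρ ⊤ (volume.restrict Ω)) :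
    ∀ᵐ x ∂(volume.restrict Ω), u x = 0 := by
  obtain ⟨C, -, hC⟩ := hp_sqrt
  exact liouville_finite_mass_general hΩ_open hμ (by positivity) hp_cont
    ⟨C, fun s hs hs1 => (abs_of_nonneg (hp_nonneg s hs)).trans_le (hC s hs hs1)⟩ hG hsol hρ1 hρ_top
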